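/- Let F, G ⊂ ℝ^k be symmetric convex sets with compact closure and nonempty interior. Let μ_B denote the centered Gaussian measure on ℝ^{2k} with nonsingular covariance matrix [[I, B],[Bᵀ, I]]. Then the function B ↦ μ_B(F × G) of B ∈ ℝ^{k×k} has a strict local minimum at B = 0. -/

import Mathlib

open MeasureTheory Matrix Real

/-!
Write `γ` for the standard Gaussian measure. To second order in `B`, the density of `μ_B` at
`(x, y)` is `γ(x) γ(y) (1 + x ⬝ B y + ½ tr (Bᵀ (1 - x xᵀ) B (1 - y yᵀ)))`. Over `F × G` the
linear term integrates to zero because the sets are centred, and the quadratic one to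
`½ tr (Bᵀ L_F B L_G)`, where `L_K = ∫_K (1 - x xᵀ) dγ`. So it suffices that `L_K` is positive
definite, that is, that conditioning on a convex body strictly decreases the variance of every
linear form `x ↦ v ⬝ x`.

This is a strict form of the Poincaré inequality `Var f ≤ ∫ |∇f|²` for the strongly log-concave
weight `γ` on `K`. The inequality itself is the second-order term as `θ → 0` of Prékopa–Leindler
applied to the weights `γ exp (θ f)` and `γ exp (-θ f)`. On a bounded `K` a linear form cannot be
extremal, since tilting it by a small multiple of a suitable nonlinear function of itself
increases `Var f - ∫ |∇f|²`.
-/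

section PrekopaLeindler

open scoped ENNReal Pointwise

theorem volume_add_volume_le_volume_add_of_isCompact {A B : Set ℝ} (hA : IsCompact A)
    (hB : IsCompact B) (hA' : A.Nonempty) (hB' : B.Nonempty) :
    volume A + volume B ≤ volume (A + B) := by
  obtain ⟨p, hpA, hp⟩ := hA.exists_isGreatest hA'
  obtain ⟨q, hqB, hq⟩ := hB.exists_isLeast hB'
  have overlap : (q +ᵥ A) ∩ (p +ᵥ B) ⊆ {p + q} := by
    rintro _ ⟨⟨x, hx, rfl⟩, ⟨y, hy, hxy⟩⟩
    have := hp hx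
    have := hq hy
    simp only [vadd_eq_add, Set.mem_singleton_iff] at hxy ⊢
    linarith
  calc volume A + volume B = volume ((q +ᵥ A) ∪ (p +ᵥ B)) := by
        rw [measure_union₀ (hB.vadd p).measurableSet.nullMeasurableSet
          (measure_mono_null overlap Real.volume_singleton), measure_vadd, measure_vadd]
    _ ≤ volume (A + B) := by
        refine measure_mono (Set.union_subset ?_ (Set.vadd_set_subset_add hpA))
        rw [add_comm A B]
        exact Set.vadd_set_subset_add hqB

theorem volume_add_volume_le_volume_add {A B : Set ℝ} (hA : MeasurableSet A)
    (hB : MeasurableSet B) (hA' : A.Nonempty) (hB' : B.Nonempty) :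
    volume A + volume B ≤ volume (A + B) := by
  obtain ⟨a, ha⟩ := hA'
  obtain ⟨b, hb⟩ := hB'
  have compact : ∀ K ⊆ A, IsCompact K → ∀ L ⊆ B, IsCompact L →
      volume K + volume L ≤ volume (A + B) := fun K hKA hK L hLB hL =>
    calc volume K + volume L ≤ volume (insert a K) + volume (insert b L) := by
          gcongr <;> exact Set.subset_insert _ _
      _ ≤ volume (insert a K + insert b L) :=
          volume_add_volume_le_volume_add_of_isCompact (hK.insert a) (hL.insert b)
            (Set.insert_nonempty _ _) (Set.insert_nonempty _ _)
      _ ≤ volume (A + B) := measure_mono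
          (Set.add_subset_add (Set.insert_subset ha hKA) (Set.insert_subset hb hLB))
  rw [hA.measure_eq_iSup_isCompact, hB.measure_eq_iSup_isCompact]
  simp_rw [iSup_and']
  exact ENNReal.biSup_add_biSup_le' ⟨∅, by simp⟩ ⟨∅, by simp⟩
    fun K hK L hL => compact K hK.1 hK.2 L hL.1 hL.2

theorem lintegral_eq_setLIntegral_meas_ofReal_lt {α : Type*} [MeasurableSpace α] (μ : Measure α)
    [SFinite μ] {f : α → ℝ≥0∞} (hf : Measurable f) :
    ∫⁻ x, f x ∂μ = ∫⁻ t in Set.Ioi (0 : ℝ), μ {x | ENNReal.ofReal t < f x} := by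
  have layer : ∀ c : ℝ≥0∞,
      ∫⁻ t in Set.Ioi (0 : ℝ), {t | ENNReal.ofReal t < c}.indicator 1 t = c := by
    intro c
    rw [lintegral_indicator_one (measurableSet_lt (by fun_prop) measurable_const),
      Measure.restrict_apply (measurableSet_lt (by fun_prop) measurable_const)]
    induction c with
    | top => simp
    | coe c =>
      have : {t | ENNReal.ofReal t < (c : ℝ≥0∞)} ∩ Set.Ioi 0 = Set.Ioo 0 (c : ℝ) := by
        ext t
        simp only [Set.mem_inter_iff, Set.mem_ofPred_eq, Set.mem_Ioi, Set.mem_Ioo]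
        constructor
        · rintro ⟨h, h0⟩
          exact ⟨h0, (ENNReal.ofReal_lt_coe_iff h0.le).1 h⟩
        · rintro ⟨h0, h⟩
          exact ⟨(ENNReal.ofReal_lt_coe_iff h0.le).2 h, h0⟩
      simp [this]
  calc ∫⁻ x, f x ∂μ
      = ∫⁻ x, (∫⁻ t in Set.Ioi (0 : ℝ), {t | ENNReal.ofReal t < f x}.indicator 1 t) ∂μ := by
        simp only [layer]
    _ = ∫⁻ t in Set.Ioi (0 : ℝ), ∫⁻ x, {x | ENNReal.ofReal t < f x}.indicator 1 x ∂μ := by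
        refine lintegral_lintegral_swap (Measurable.aemeasurable ?_)
        exact measurable_one.indicator (measurableSet_lt (f := fun p : α × ℝ => ENNReal.ofReal p.2)
          (by fun_prop) (by fun_prop))
    _ = _ := by
        refine lintegral_congr fun t => ?_
        rw [lintegral_indicator_one (measurableSet_lt measurable_const hf)]

theorem lintegral_add_lintegral_le_of_min_le {a b : ℝ} (ha : 0 < a) (hb : 0 < b)
    {f g h : ℝ → ℝ≥0∞} (hf : Measurable f) (hg : Measurable g) (hh : Measurable h)
    (hf1 : ⨆ x, f x = 1) (hg1 : ⨆ x, g x = 1) (H : ∀ x y, min (f x) (g y) ≤ h (a * x + b * y)) :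
    ENNReal.ofReal a * (∫⁻ x, f x) + ENNReal.ofReal b * (∫⁻ x, g x) ≤ ∫⁻ x, h x := by
  have meas_Ioi {f : ℝ → ℝ≥0∞} (hf : Measurable f) (t : ℝ) :
      MeasurableSet {x | ENNReal.ofReal t < f x} := measurableSet_lt measurable_const hf
  have meas_measure {f : ℝ → ℝ≥0∞} : Measurable fun t => volume {x | ENNReal.ofReal t < f x} :=
    Antitone.measurable fun s t hst => measure_mono fun x hx =>
      (ENNReal.ofReal_le_ofReal hst).trans_lt hx
  rw [lintegral_eq_setLIntegral_meas_ofReal_lt _ hf, lintegral_eq_setLIntegral_meas_ofReal_lt _ hg,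
    lintegral_eq_setLIntegral_meas_ofReal_lt _ hh]
  rw [← lintegral_const_mul' _ _ ENNReal.ofReal_ne_top,
    ← lintegral_const_mul' _ _ ENNReal.ofReal_ne_top,
    ← lintegral_add_left (meas_measure.const_mul _)]
  refine lintegral_mono fun t => ?_
  rcases lt_or_ge (ENNReal.ofReal t) 1 with ht | ht
  · obtain ⟨x, hx⟩ := lt_iSup_iff.1 (hf1 ▸ ht)
    obtain ⟨y, hy⟩ := lt_iSup_iff.1 (hg1 ▸ ht)
    calc ENNReal.ofReal a * volume {x | ENNReal.ofReal t < f x} +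
          ENNReal.ofReal b * volume {x | ENNReal.ofReal t < g x}
        = volume (a • {x | ENNReal.ofReal t < f x}) +
            volume (b • {x | ENNReal.ofReal t < g x}) := by
          simp [Measure.addHaar_smul, abs_of_pos ha, abs_of_pos hb]
      _ ≤ volume (a • {x | ENNReal.ofReal t < f x} + b • {x | ENNReal.ofReal t < g x}) :=
          volume_add_volume_le_volume_add ((meas_Ioi hf t).const_smul₀ a)
            ((meas_Ioi hg t).const_smul₀ b) ⟨_, Set.smul_mem_smul_set hx⟩
            ⟨_, Set.smul_mem_smul_set hy⟩
      _ ≤ volume {x | ENNReal.ofReal t < h x} := by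
          refine measure_mono ?_
          rintro _ ⟨_, ⟨x, hx, rfl⟩, _, ⟨y, hy, rfl⟩, rfl⟩
          exact (lt_min hx hy).trans_le (H x y)
  · have empty {f : ℝ → ℝ≥0∞} (hf : ⨆ x, f x = 1) : {x | ENNReal.ofReal t < f x} = ∅ :=
      Set.eq_empty_of_forall_notMem fun x hx =>
        (ht.trans_lt hx).not_ge (hf ▸ le_iSup f x)
    simp [empty hf1, empty hg1]

theorem ennreal_geom_mean_le_arith_mean2_weighted {a b : ℝ} (ha : 0 < a) (hb : 0 < b)
    (hab : a + b = 1) (x y : ℝ≥0∞) :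
    x ^ a * y ^ b ≤ ENNReal.ofReal a * x + ENNReal.ofReal b * y := by
  have hpq : (a⁻¹).HolderConjugate b⁻¹ := ⟨by simp [hab], by positivity, by positivity⟩
  have h := ENNReal.young_inequality (x ^ a) (y ^ b) hpq
  rwa [← ENNReal.rpow_mul, ← ENNReal.rpow_mul, mul_inv_cancel₀ ha.ne', mul_inv_cancel₀ hb.ne',
    ENNReal.rpow_one, ENNReal.rpow_one, ENNReal.ofReal_inv_of_pos ha, ENNReal.ofReal_inv_of_pos hb,
    ENNReal.div_eq_inv_mul, ENNReal.div_eq_inv_mul, inv_inv, inv_inv] at h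

theorem ennreal_min_le_rpow_mul_rpow {a b : ℝ} (ha : 0 ≤ a) (hb : 0 ≤ b) (hab : a + b = 1)
    (x y : ℝ≥0∞) : min x y ≤ x ^ a * y ^ b := by
  calc min x y = min x y ^ a * min x y ^ b := by
        rw [← ENNReal.rpow_add_of_nonneg _ _ ha hb, hab, ENNReal.rpow_one]
    _ ≤ x ^ a * y ^ b := by
        gcongr
        exacts [min_le_left _ _, min_le_right _ _]

theorem lintegral_rpow_mul_lintegral_rpow_le_of_iSup_ne_top {a b : ℝ} (ha : 0 < a) (hb : 0 < b)
    (hab : a + b = 1) {f g h : ℝ → ℝ≥0∞} (hf : Measurable f) (hg : Measurable g)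
    (hh : Measurable h) (hf' : ⨆ x, f x ≠ ∞) (hg' : ⨆ x, g x ≠ ∞)
    (H : ∀ x y, f x ^ a * g y ^ b ≤ h (a * x + b * y)) :
    (∫⁻ x, f x) ^ a * (∫⁻ x, g x) ^ b ≤ ∫⁻ x, h x := by
  set M := ⨆ x, f x
  set N := ⨆ x, g x
  rcases eq_or_ne M 0 with hM | hM
  · simp [ENNReal.iSup_eq_zero.1 hM, ha]
  rcases eq_or_ne N 0 with hN | hN
  · simp [ENNReal.iSup_eq_zero.1 hN, hb]
  have hMa : M ^ a ≠ 0 ∧ M ^ a ≠ ∞ := by simp [hM, hf', ha]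
  have hNb : N ^ b ≠ 0 ∧ N ^ b ≠ ∞ := by simp [hN, hg', hb]
  have hMN : M ^ a * N ^ b ≠ 0 ∧ M ^ a * N ^ b ≠ ∞ :=
    ⟨mul_ne_zero hMa.1 hNb.1, ENNReal.mul_ne_top hMa.2 hNb.2⟩
  have normalized : ∀ x y, min (M⁻¹ * f x) (N⁻¹ * g y) ≤
      (M ^ a * N ^ b)⁻¹ * h (a * x + b * y) := fun x y =>
    calc min (M⁻¹ * f x) (N⁻¹ * g y)
        ≤ (M⁻¹ * f x) ^ a * (N⁻¹ * g y) ^ b := ennreal_min_le_rpow_mul_rpow ha.le hb.le hab _ _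
      _ = (M ^ a * N ^ b)⁻¹ * (f x ^ a * g y ^ b) := by
          rw [ENNReal.mul_rpow_of_nonneg _ _ ha.le, ENNReal.mul_rpow_of_nonneg _ _ hb.le,
            ENNReal.inv_rpow, ENNReal.inv_rpow, ENNReal.mul_inv (.inl hMa.1) (.inl hMa.2)]
          ring
      _ ≤ _ := by gcongr; exact H x y
  have additive := lintegral_add_lintegral_le_of_min_le ha hb (hf.const_mul M⁻¹)
    (hg.const_mul N⁻¹) (hh.const_mul (M ^ a * N ^ b)⁻¹)
    (by rw [← ENNReal.mul_iSup, ENNReal.inv_mul_cancel hM hf'])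
    (by rw [← ENNReal.mul_iSup, ENNReal.inv_mul_cancel hN hg']) normalized
  rw [lintegral_const_mul _ hf, lintegral_const_mul _ hg, lintegral_const_mul _ hh] at additive
  calc (∫⁻ x, f x) ^ a * (∫⁻ x, g x) ^ b
      = M ^ a * N ^ b * ((M⁻¹ * ∫⁻ x, f x) ^ a * (N⁻¹ * ∫⁻ x, g x) ^ b) := by
        rw [mul_mul_mul_comm, ← ENNReal.mul_rpow_of_nonneg _ _ ha.le,
          ← ENNReal.mul_rpow_of_nonneg _ _ hb.le, ENNReal.mul_inv_cancel_left hM hf',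
          ENNReal.mul_inv_cancel_left hN hg']
    _ ≤ M ^ a * N ^ b * ((M ^ a * N ^ b)⁻¹ * ∫⁻ x, h x) := by
        refine mul_le_mul_right ?_ _
        exact (ennreal_geom_mean_le_arith_mean2_weighted ha hb hab _ _).trans additive
    _ = ∫⁻ x, h x := ENNReal.mul_inv_cancel_left hMN.1 hMN.2

theorem lintegral_rpow_eq_iSup_lintegral_min_natCast {α : Type*} [MeasurableSpace α]
    (μ : Measure α) {f : α → ℝ≥0∞} (hf : Measurable f) {a : ℝ} (ha : 0 < a) :
    (∫⁻ x, f x ∂μ) ^ a = ⨆ n : ℕ, (∫⁻ x, min (f x) n ∂μ) ^ a := by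
  have truncate : ∀ x, f x = ⨆ n : ℕ, min (f x) n := fun x => by
    rw [← inf_iSup_eq, ENNReal.iSup_natCast, inf_top_eq]
  simp_rw [← ENNReal.orderIsoRpow_apply a ha, ← OrderIso.map_iSup]
  conv_lhs => rw [lintegral_congr truncate]
  rw [lintegral_iSup (fun n => hf.min measurable_const)
    fun m n hmn x => min_le_min_left _ (by exact_mod_cast hmn)]

theorem prekopa_leindler_real {a b : ℝ} (ha : 0 < a) (hb : 0 < b) (hab : a + b = 1)
    {f g h : ℝ → ℝ≥0∞} (hf : Measurable f) (hg : Measurable g) (hh : Measurable h)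
    (H : ∀ x y, f x ^ a * g y ^ b ≤ h (a * x + b * y)) :
    (∫⁻ x, f x) ^ a * (∫⁻ x, g x) ^ b ≤ ∫⁻ x, h x := by
  have bounded (f : ℝ → ℝ≥0∞) (n : ℕ) : ⨆ x, min (f x) n ≠ ∞ :=
    ne_top_of_le_ne_top (ENNReal.natCast_ne_top n) (iSup_le fun x => min_le_right _ _)
  simp only [lintegral_rpow_eq_iSup_lintegral_min_natCast _ hf ha,
    lintegral_rpow_eq_iSup_lintegral_min_natCast _ hg hb, ENNReal.iSup_mul, ENNReal.mul_iSup,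
    iSup_le_iff]
  refine fun m n => lintegral_rpow_mul_lintegral_rpow_le_of_iSup_ne_top ha hb hab
    (hf.min measurable_const) (hg.min measurable_const) hh (bounded f _) (bounded g _)
    fun x y => le_trans ?_ (H x y)
  gcongr <;> exact min_le_left _ _

theorem prekopa_leindler_fin {n : ℕ} {a b : ℝ} (ha : 0 < a) (hb : 0 < b) (hab : a + b = 1)
    {f g h : (Fin n → ℝ) → ℝ≥0∞} (hf : Measurable f) (hg : Measurable g) (hh : Measurable h)
    (H : ∀ x y, f x ^ a * g y ^ b ≤ h (a • x + b • y)) :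
    (∫⁻ x, f x) ^ a * (∫⁻ x, g x) ^ b ≤ ∫⁻ x, h x := by
  induction n with
  | zero => simpa [volume_pi, Measure.pi_of_empty _ 0] using H 0 0
  | succ n ih =>
    have split := (volume_preserving_piFinSuccAbove (fun _ : Fin (n + 1) => ℝ) 0).symm
    have cons_eq : ⇑(MeasurableEquiv.piFinSuccAbove (fun _ : Fin (n + 1) => ℝ) 0).symm =
        fun p => Fin.cons p.1 p.2 := by
      ext p
      simp [MeasurableEquiv.piFinSuccAbove, Fin.insertNthEquiv]
    rw [cons_eq] at split
    have fubini : ∀ u : (Fin (n + 1) → ℝ) → ℝ≥0∞, Measurable u →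
        ∫⁻ x, u x = ∫⁻ s : ℝ, ∫⁻ z : Fin n → ℝ, u (Fin.cons s z) := fun u hu => by
      rw [← split.lintegral_comp hu]
      exact lintegral_prod _ (hu.comp split.measurable).aemeasurable
    have slice : ∀ u : (Fin (n + 1) → ℝ) → ℝ≥0∞, Measurable u → ∀ s : ℝ,
        Measurable fun z : Fin n → ℝ => u (Fin.cons s z) := fun u hu s =>
      hu.comp (split.measurable.comp measurable_prodMk_left)
    have marginal : ∀ u : (Fin (n + 1) → ℝ) → ℝ≥0∞, Measurable u →
        Measurable fun s : ℝ => ∫⁻ z : Fin n → ℝ, u (Fin.cons s z) := fun u hu =>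
      Measurable.lintegral_prod_right' (hu.comp split.measurable)
    rw [fubini f hf, fubini g hg, fubini h hh]
    refine prekopa_leindler_real ha hb hab (marginal f hf) (marginal g hg) (marginal h hh)
      fun s t => ih (slice f hf s) (slice g hg t) (slice h hh _) fun x y => ?_
    convert H (Fin.cons s x) (Fin.cons t y) using 2
    ext i
    cases i using Fin.cases <;> simp

theorem prekopa_leindler {ι : Type*} [Fintype ι] {a b : ℝ} (ha : 0 < a) (hb : 0 < b)
    (hab : a + b = 1) {f g h : (ι → ℝ) → ℝ≥0∞} (hf : Measurable f) (hg : Measurable g)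
    (hh : Measurable h) (H : ∀ x y, f x ^ a * g y ^ b ≤ h (a • x + b • y)) :
    (∫⁻ x, f x) ^ a * (∫⁻ x, g x) ^ b ≤ ∫⁻ x, h x := by
  have reindex :=
    volume_measurePreserving_piCongrLeft (fun _ : ι => ℝ) (Fintype.equivFin ι).symm
  rw [← reindex.lintegral_comp hf, ← reindex.lintegral_comp hg, ← reindex.lintegral_comp hh]
  refine prekopa_leindler_fin ha hb hab (hf.comp reindex.measurable)
    (hg.comp reindex.measurable) (hh.comp reindex.measurable) fun x y => ?_
  convert H _ _ using 2
  ext i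
  obtain ⟨j, rfl⟩ := (Fintype.equivFin ι).symm.surjective i
  simp [MeasurableEquiv.piCongrLeft_apply_apply]

end PrekopaLeindler

section StronglyLogConcave

open scoped ENNReal Topology

theorem setIntegral_mul_setIntegral_le_sq {ι : Type*} [Fintype ι] {K : Set (ι → ℝ)}
    (hK : IsCompact K) (hKconv : Convex ℝ K) {f g h : (ι → ℝ) → ℝ} (hf : Continuous f)
    (hg : Continuous g) (hh : Continuous h) (hf0 : 0 ≤ f) (hg0 : 0 ≤ g) (hh0 : 0 ≤ h)
    (H : ∀ x ∈ K, ∀ y ∈ K, f x * g y ≤ h (midpoint ℝ x y) ^ 2) :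
    (∫ x in K, f x) * ∫ x in K, g x ≤ (∫ x in K, h x) ^ 2 := by
  have hKm := hK.measurableSet
  have measurable_indicator {u : (ι → ℝ) → ℝ} (hu : Continuous u) :
      Measurable (K.indicator fun x => ENNReal.ofReal (u x)) :=
    hu.measurable.ennreal_ofReal.indicator hKm
  have integral_eq {u : (ι → ℝ) → ℝ} (hu : Continuous u) (hu0 : 0 ≤ u) :
      ENNReal.ofReal (∫ x in K, u x) = ∫⁻ x, K.indicator (fun x => ENNReal.ofReal (u x)) x := by
    rw [lintegral_indicator hKm]
    exact ofReal_integral_eq_lintegral_ofReal (hu.continuousOn.integrableOn_compact hK)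
      (.of_forall hu0)
  have geometric_mean : ∀ x y, K.indicator (fun x => ENNReal.ofReal (f x)) x ^ (1 / 2 : ℝ) *
      K.indicator (fun x => ENNReal.ofReal (g x)) y ^ (1 / 2 : ℝ) ≤
        K.indicator (fun x => ENNReal.ofReal (h x)) ((1 / 2 : ℝ) • x + (1 / 2 : ℝ) • y) := by
    intro x y
    by_cases hx : x ∈ K
    swap; · simp [hx]
    by_cases hy : y ∈ K
    swap; · simp [hy]
    have hxy : (1 / 2 : ℝ) • x + (1 / 2 : ℝ) • y = midpoint ℝ x y := by
      rw [midpoint_eq_smul_add, smul_add, invOf_eq_inv, one_div]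
    rw [hxy, Set.indicator_of_mem hx, Set.indicator_of_mem hy,
      Set.indicator_of_mem (hKconv.midpoint_mem hx hy), ← ENNReal.mul_rpow_of_nonneg _ _ (by simp),
      ← ENNReal.ofReal_mul (hf0 x), ENNReal.ofReal_rpow_of_nonneg (mul_nonneg (hf0 x) (hg0 y))
      (by simp), ← Real.sqrt_eq_rpow]
    exact ENNReal.ofReal_le_ofReal (Real.sqrt_le_left (hh0 _) |>.2 (H x hx y hy))
  have pl := prekopa_leindler one_half_pos one_half_pos (add_halves 1) (measurable_indicator hf)
    (measurable_indicator hg) (measurable_indicator hh) geometric_mean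
  have hf_nonneg : 0 ≤ ∫ x in K, f x := integral_nonneg hf0
  rw [← integral_eq hf hf0, ← integral_eq hg hg0, ← integral_eq hh hh0,
    ← ENNReal.mul_rpow_of_nonneg _ _ (by simp), ← ENNReal.ofReal_mul hf_nonneg,
    ENNReal.ofReal_rpow_of_nonneg (mul_nonneg hf_nonneg (integral_nonneg hg0)) (by simp),
    ← Real.sqrt_eq_rpow, ENNReal.ofReal_le_ofReal_iff (integral_nonneg hh0)] at pl
  exact (Real.sqrt_le_left (integral_nonneg hh0)).1 pl

theorem exists_norm_sub_sub_fderiv_midpoint_le {E F : Type*} [NormedAddCommGroup E]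
    [NormedSpace ℝ E] [NormedAddCommGroup F] [NormedSpace ℝ F] {f : E → F} (hf : ContDiff ℝ 2 f)
    {K : Set E} (hK : IsCompact K) (hKconv : Convex ℝ K) :
    ∃ C, 0 ≤ C ∧ ∀ x ∈ K, ∀ y ∈ K,
      ‖f x - f y - fderiv ℝ f (midpoint ℝ x y) (x - y)‖ ≤ C * ‖x - y‖ ^ 2 := by
  have hf' : ContDiff ℝ 1 (fderiv ℝ f) := hf.fderiv_right (by norm_num)
  obtain ⟨L, hL⟩ := (hf'.locallyLipschitz.locallyLipschitzOn).exists_lipschitzOnWith_of_compact hK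
  refine ⟨L / 2, by positivity, fun x hx y hy => ?_⟩
  have near : ∀ z ∈ segment ℝ y x,
      ‖fderiv ℝ f z - fderiv ℝ f (midpoint ℝ x y)‖ ≤ L / 2 * ‖x - y‖ := by
    intro z hz
    have hz' : z ∈ Metric.closedBall (midpoint ℝ x y) (‖x - y‖ / 2) :=
      (convex_closedBall _ _).segment_subset
        (by simp [dist_eq_norm, norm_smul, norm_sub_rev x y, div_eq_inv_mul])
        (by simp [dist_eq_norm, norm_smul, norm_sub_rev x y, div_eq_inv_mul]) hz
    calc _ ≤ L * ‖z - midpoint ℝ x y‖ :=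
          hL.norm_sub_le (hKconv.segment_subset hy hx hz) (hKconv.midpoint_mem hx hy)
      _ ≤ L * (‖x - y‖ / 2) := by gcongr; simpa [dist_eq_norm] using hz'
      _ = L / 2 * ‖x - y‖ := by ring
  calc _ ≤ L / 2 * ‖x - y‖ * ‖x - y‖ :=
        (convex_segment y x).norm_image_sub_le_of_norm_fderiv_le'
          (fun z _ => (hf.differentiable (by norm_num)).differentiableAt) near
          (left_mem_segment ℝ y x) (right_mem_segment ℝ y x)
    _ = L / 2 * ‖x - y‖ ^ 2 := by ring

theorem one_add_add_sq_div_two_sub_le_exp (s : ℝ) : 1 + s + s ^ 2 / 2 - |s| ^ 3 ≤ exp s := by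
  rcases le_total 0 s with hs | hs
  · have := Real.quadratic_le_exp_of_nonneg hs
    have : 0 ≤ |s| ^ 3 := by positivity
    linarith
  rcases le_total (-1) s with hs' | hs'
  · have hs1 : |s| ≤ 1 := by rw [abs_of_nonpos hs]; linarith
    have h := Real.exp_bound hs1 (n := 3) (by norm_num)
    have hexp : ∑ m ∈ Finset.range 3, s ^ m / m.factorial = 1 + s + s ^ 2 / 2 := by
      simp [Finset.sum_range_succ]
    rw [hexp] at h
    have := (abs_le.1 h).1
    have : |s| ^ 3 * ((Nat.succ 3 : ℕ) / ((Nat.factorial 3 : ℕ) * (3 : ℕ) : ℝ)) ≤ |s| ^ 3 :=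
      mul_le_of_le_one_right (by positivity) (by norm_num [Nat.factorial])
    linarith
  · rw [abs_of_nonpos hs]
    nlinarith [exp_pos s, mul_nonneg (sub_nonneg.2 hs') (sq_nonneg s), sq_nonneg (s + 1)]

theorem exp_le_one_add_add_sq {s : ℝ} (hs : |s| ≤ 1) : exp s ≤ 1 + s + s ^ 2 := by
  linarith [(abs_le.1 (Real.abs_exp_sub_one_sub_id_le hs)).2]

theorem setIntegral_quadratic_sub_le_setIntegral_exp {α : Type*} [TopologicalSpace α] [T2Space α]
    [MeasurableSpace α] [BorelSpace α] {μ : Measure α} [IsFiniteMeasureOnCompacts μ] {K : Set α}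
    (hK : IsCompact K) {f w : α → ℝ} (hf : Continuous f) (hw : Continuous w) (hw0 : 0 ≤ w)
    (θ : ℝ) :
    (∫ x in K, w x ∂μ) + θ * (∫ x in K, f x * w x ∂μ) + θ ^ 2 / 2 * (∫ x in K, f x ^ 2 * w x ∂μ) -
      |θ| ^ 3 * (∫ x in K, |f x| ^ 3 * w x ∂μ) ≤ ∫ x in K, w x * exp (θ * f x) ∂μ := by
  have integrable {u : α → ℝ} (hu : Continuous u) : IntegrableOn u K μ :=
    hu.continuousOn.integrableOn_compact hK
  have pointwise (x : α) : w x + θ * (f x * w x) + θ ^ 2 / 2 * (f x ^ 2 * w x) -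
      |θ| ^ 3 * (|f x| ^ 3 * w x) ≤ w x * exp (θ * f x) := by
    have := mul_le_mul_of_nonneg_left (one_add_add_sq_div_two_sub_le_exp (θ * f x)) (hw0 x)
    rw [abs_mul] at this
    linarith
  calc _ = ∫ x in K, w x + θ * (f x * w x) + θ ^ 2 / 2 * (f x ^ 2 * w x) -
        |θ| ^ 3 * (|f x| ^ 3 * w x) ∂μ := by
        simp only [← integral_const_mul]
        rw [integral_sub (integrable (by fun_prop)) (integrable (by fun_prop)),
          integral_add (integrable (by fun_prop)) (integrable (by fun_prop)),
          integral_add (integrable (by fun_prop)) (integrable (by fun_prop))]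
    _ ≤ _ := setIntegral_mono (integrable (by fun_prop)) (integrable (by fun_prop)) pointwise

theorem eventually_setIntegral_exp_le {α : Type*} [TopologicalSpace α] [T2Space α]
    [MeasurableSpace α] [BorelSpace α] {μ : Measure α} [IsFiniteMeasureOnCompacts μ] {K : Set α}
    (hK : IsCompact K) {q w : α → ℝ} (hq : Continuous q) (hw : Continuous w) (hw0 : 0 ≤ w) :
    ∀ᶠ s in 𝓝 (0 : ℝ), ∫ x in K, w x * exp (s * q x) ∂μ ≤
      (∫ x in K, w x ∂μ) + s * (∫ x in K, q x * w x ∂μ) + s ^ 2 * (∫ x in K, q x ^ 2 * w x ∂μ) := by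
  have integrable {u : α → ℝ} (hu : Continuous u) : IntegrableOn u K μ :=
    hu.continuousOn.integrableOn_compact hK
  obtain ⟨M, hM⟩ := hK.exists_bound_of_continuousOn hq.continuousOn
  have small : ∀ᶠ s in 𝓝 (0 : ℝ), |s| * M < 1 :=
    ContinuousAt.eventually_lt (by fun_prop) continuousAt_const (by simp)
  filter_upwards [small] with s hs
  have pointwise : ∀ x ∈ K, w x * exp (s * q x) ≤
      w x + s * (q x * w x) + s ^ 2 * (q x ^ 2 * w x) := by
    intro x hx
    have hsq : |s * q x| ≤ 1 := by
      rw [abs_mul]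
      exact (mul_le_mul_of_nonneg_left (hM x hx) (abs_nonneg s)).trans hs.le
    have := mul_le_mul_of_nonneg_left (exp_le_one_add_add_sq hsq) (hw0 x)
    linarith
  calc _ ≤ ∫ x in K, w x + s * (q x * w x) + s ^ 2 * (q x ^ 2 * w x) ∂μ :=
        setIntegral_mono_on (integrable (by fun_prop)) (integrable (by fun_prop))
          hK.measurableSet pointwise
    _ = _ := by
        simp only [← integral_const_mul]
        rw [integral_add (integrable (by fun_prop)) (integrable (by fun_prop)),
          integral_add (integrable (by fun_prop)) (integrable (by fun_prop))]

/-- `w` is strongly log-concave, with the constant of the standard Gaussian density: `-log w` is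
`1`-strongly convex in the Euclidean norm. The inequality is stated at midpoints and
multiplicatively, the form in which Prékopa–Leindler consumes it. -/
def IsStronglyLogConcave {ι : Type*} [Fintype ι] (w : (ι → ℝ) → ℝ) : Prop :=
  ∀ x y, w x * w y ≤ w (midpoint ℝ x y) ^ 2 * exp (-((x - y) ⬝ᵥ (x - y)) / 4)

theorem norm_sq_le_dotProduct_self {ι : Type*} [Fintype ι] (v : ι → ℝ) : ‖v‖ ^ 2 ≤ v ⬝ᵥ v := by
  have hv : 0 ≤ v ⬝ᵥ v := Finset.sum_nonneg fun i _ => mul_self_nonneg (v i)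
  refine (Real.le_sqrt (norm_nonneg v) hv).1
    ((pi_norm_le_iff_of_nonneg (Real.sqrt_nonneg _)).2 fun i => ?_)
  refine Real.abs_le_sqrt ?_
  rw [sq]
  exact Finset.single_le_sum (f := fun j => v j * v j) (fun j _ => mul_self_nonneg _)
    (Finset.mem_univ i)

theorem mul_dotProduct_sub_le {ι : Type*} [Fintype ι] (p v : ι → ℝ) (θ : ℝ) {κ : ℝ}
    (hκ : 0 < κ) :
    θ * p ⬝ᵥ v - κ / 4 * v ⬝ᵥ v ≤ θ ^ 2 / κ * p ⬝ᵥ p := by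
  simp only [dotProduct, Finset.mul_sum, ← Finset.sum_sub_distrib]
  refine Finset.sum_le_sum fun i _ => ?_
  have h : 0 ≤ (κ * v i - 2 * θ * p i) ^ 2 / (4 * κ) := by positivity
  have e : (κ * v i - 2 * θ * p i) ^ 2 / (4 * κ) =
    κ / 4 * (v i * v i) + θ ^ 2 / κ * (p i * p i) - θ * (p i * v i) := by field_simp; ring
  linarith

theorem apply_eq_dotProduct_single {ι : Type*} [Fintype ι] [DecidableEq ι] {F : Type*}
    [FunLike F (ι → ℝ) ℝ] [LinearMapClass F ℝ (ι → ℝ) ℝ] (L : F) (v : ι → ℝ) :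
    L v = (fun i => L (Pi.single i 1)) ⬝ᵥ v := by
  conv_lhs => rw [pi_eq_sum_univ' v, map_sum]
  refine Finset.sum_congr rfl fun i _ => ?_
  rw [map_smul, smul_eq_mul, mul_comm]

theorem le_of_le_of_le_of_mul_le_sq {a b c d : ℝ} (hab : a ≤ b) (hac : a ≤ c) (hd : 0 ≤ d)
    (h : b * c ≤ d ^ 2) : a ≤ d := by
  by_contra! hda
  nlinarith [mul_le_mul hab hac (hd.trans hda.le) (hd.trans (hda.le.trans hab))]

namespace IsStronglyLogConcave

variable {ι : Type*} [Fintype ι] [DecidableEq ι] {w f : (ι → ℝ) → ℝ} {K : Set (ι → ℝ)}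

theorem exists_setIntegral_exp_mul_setIntegral_exp_neg_le (hw : IsStronglyLogConcave w)
    (hwc : Continuous w) (hw0 : 0 ≤ w) (hK : IsCompact K) (hKconv : Convex ℝ K)
    (hf : ContDiff ℝ 2 f) :
    ∃ C : ℝ, ∀ θ, 0 ≤ θ → 0 < 1 - C * θ →
      (∫ x in K, w x * exp (θ * f x)) * ∫ x in K, w x * exp (-θ * f x) ≤
        (∫ x in K, w x * exp (θ ^ 2 / (2 * (1 - C * θ)) *
          ∑ i, fderiv ℝ f x (Pi.single i 1) ^ 2)) ^ 2 := by
  obtain ⟨C, hC, taylor⟩ := exists_norm_sub_sub_fderiv_midpoint_le hf hK hKconv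
  have hfc : Continuous f := hf.continuous
  have hf' : Continuous (fderiv ℝ f) := hf.continuous_fderiv (by norm_num)
  refine ⟨4 * C, fun θ hθ hκ => ?_⟩
  refine setIntegral_mul_setIntegral_le_sq hK hKconv (by fun_prop) (by fun_prop) (by fun_prop)
    (fun x => mul_nonneg (hw0 x) (exp_nonneg _)) (fun x => mul_nonneg (hw0 x) (exp_nonneg _))
    (fun x => mul_nonneg (hw0 x) (exp_nonneg _)) fun x hx y hy => ?_
  set m := midpoint ℝ x y
  set v := x - y
  set p : ι → ℝ := fun i => fderiv ℝ f m (Pi.single i 1)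
  have hp : p ⬝ᵥ p = ∑ i, fderiv ℝ f m (Pi.single i 1) ^ 2 := by simp [p, dotProduct, sq]
  have increment : f x - f y ≤ p ⬝ᵥ v + C * v ⬝ᵥ v := by
    have h := (le_abs_self _).trans (taylor x hx y hy)
    rw [apply_eq_dotProduct_single (fderiv ℝ f m)] at h
    have := mul_le_mul_of_nonneg_left (norm_sq_le_dotProduct_self v) hC
    linarith
  have exponent : -(v ⬝ᵥ v) / 4 + θ * (f x - f y) ≤
      2 * (θ ^ 2 / (2 * (1 - 4 * C * θ)) * p ⬝ᵥ p) := by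
    have h := mul_dotProduct_sub_le p v θ hκ
    have e : 2 * (θ ^ 2 / (2 * (1 - 4 * C * θ)) * p ⬝ᵥ p) = θ ^ 2 / (1 - 4 * C * θ) * p ⬝ᵥ p := by
      field_simp
    rw [e]
    linarith [mul_le_mul_of_nonneg_left increment hθ]
  calc w x * exp (θ * f x) * (w y * exp (-θ * f y))
      = w x * w y * exp (θ * (f x - f y)) := by
        rw [mul_mul_mul_comm, ← exp_add]
        ring_nf
    _ ≤ w m ^ 2 * exp (-(v ⬝ᵥ v) / 4) * exp (θ * (f x - f y)) := by
        exact mul_le_mul_of_nonneg_right (hw x y) (exp_nonneg _)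
    _ ≤ w m ^ 2 * exp (2 * (θ ^ 2 / (2 * (1 - 4 * C * θ)) * p ⬝ᵥ p)) := by
        rw [mul_assoc, ← exp_add]
        gcongr
    _ = _ := by rw [two_mul, exp_add, hp]; ring

theorem exists_eventually_setIntegral_sq_le (hw : IsStronglyLogConcave w)
    (hwc : Continuous w) (hw0 : 0 ≤ w) (hK : IsCompact K) (hKconv : Convex ℝ K)
    (hf : ContDiff ℝ 2 f) (hmean : ∫ x in K, f x * w x = 0) :
    ∃ C A T : ℝ, ∀ᶠ θ in 𝓝[>] (0 : ℝ), ∫ x in K, f x ^ 2 * w x ≤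
      (∫ x in K, (∑ i, fderiv ℝ f x (Pi.single i 1) ^ 2) * w x) / (1 - C * θ) +
        A * θ ^ 2 / (1 - C * θ) ^ 2 + T * θ := by
  have hfc : Continuous f := hf.continuous
  have hf' : Continuous (fderiv ℝ f) := hf.continuous_fderiv (by norm_num)
  set q : (ι → ℝ) → ℝ := fun x => ∑ i, fderiv ℝ f x (Pi.single i 1) ^ 2
  have hq : Continuous q := by fun_prop
  set Q := ∫ x in K, q x * w x
  set A := ∫ x in K, q x ^ 2 * w x
  set T := ∫ x in K, |f x| ^ 3 * w x
  obtain ⟨C, exp_bound⟩ :=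
    hw.exists_setIntegral_exp_mul_setIntegral_exp_neg_le hwc hw0 hK hKconv hf
  let s : ℝ → ℝ := fun θ => θ ^ 2 / (2 * (1 - C * θ))
  have hs : Filter.Tendsto s (𝓝 0) (𝓝 0) := by
    have : ContinuousAt s 0 := ContinuousAt.div (by fun_prop) (by fun_prop) (by simp)
    simpa [ContinuousAt, s] using this
  have hκ : ∀ᶠ θ in 𝓝 (0 : ℝ), 0 < 1 - C * θ :=
    ContinuousAt.eventually_lt continuousAt_const (by fun_prop) (by simp)
  refine ⟨C, A / 2, 2 * T, ?_⟩
  filter_upwards [nhdsWithin_le_nhds hκ, nhdsWithin_le_nhds (hs.eventually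
    (eventually_setIntegral_exp_le (μ := volume) hK hq hwc hw0)), self_mem_nhdsWithin]
    with θ hκ hupper hθ
  have hθ : 0 < θ := hθ
  have hpos := setIntegral_quadratic_sub_le_setIntegral_exp (μ := volume) hK hfc hwc hw0 θ
  have hneg := setIntegral_quadratic_sub_le_setIntegral_exp (μ := volume) hK hfc hwc hw0 (-θ)
  rw [hmean, abs_of_pos hθ] at hpos
  rw [hmean, abs_neg, abs_of_pos hθ, neg_sq, mul_zero, ← mul_zero θ] at hneg
  have hexp_nonneg : 0 ≤ ∫ x in K, w x * exp (s θ * q x) :=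
    integral_nonneg fun x => mul_nonneg (hw0 x) (exp_nonneg _)
  have hsecond := (le_of_le_of_le_of_mul_le_sq hpos hneg hexp_nonneg (exp_bound θ hθ.le hκ)).trans
    hupper
  have e : θ ^ 2 / 2 * (Q / (1 - C * θ) + A / 2 * θ ^ 2 / (1 - C * θ) ^ 2 + 2 * T * θ) =
      s θ * Q + s θ ^ 2 * A + θ ^ 3 * T := by
    simp only [s]
    field_simp
  refine le_of_mul_le_mul_left ?_ (show 0 < θ ^ 2 / 2 by positivity)
  linarith

theorem setIntegral_sq_le_setIntegral_sum_fderiv_sq (hw : IsStronglyLogConcave w)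
    (hwc : Continuous w) (hw0 : 0 ≤ w) (hK : IsCompact K) (hKconv : Convex ℝ K)
    (hf : ContDiff ℝ 2 f) (hmean : ∫ x in K, f x * w x = 0) :
    ∫ x in K, f x ^ 2 * w x ≤ ∫ x in K, (∑ i, fderiv ℝ f x (Pi.single i 1) ^ 2) * w x := by
  obtain ⟨C, A, T, bound⟩ := hw.exists_eventually_setIntegral_sq_le hwc hw0 hK hKconv hf hmean
  refine ge_of_tendsto ?_ bound
  set Q := ∫ x in K, (∑ i, fderiv ℝ f x (Pi.single i 1) ^ 2) * w x
  have hlim : ContinuousAt (fun θ => Q / (1 - C * θ) + A * θ ^ 2 / (1 - C * θ) ^ 2 + T * θ) 0 := by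
    refine ((ContinuousAt.div ?_ ?_ ?_).add (ContinuousAt.div ?_ ?_ ?_)).add ?_ <;>
      first | fun_prop | simp
  simpa [ContinuousAt] using hlim.tendsto.mono_left nhdsWithin_le_nhds

end IsStronglyLogConcave

theorem hasDerivAt_mul_exp_sq_div {a : ℝ} (ha : a ≠ 0) (t : ℝ) :
    HasDerivAt (fun t => t * exp (t ^ 2 / (2 * a)))
      ((1 + t ^ 2 / a) * exp (t ^ 2 / (2 * a))) t := by
  have h : HasDerivAt (fun t : ℝ => t ^ 2 / (2 * a)) (2 * t / (2 * a)) t := by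
    simpa using (hasDerivAt_pow 2 t).div_const (2 * a)
  refine ((hasDerivAt_id' t).mul h.exp).congr_deriv ?_
  field_simp

theorem sq_sub_le_tilt_sq_sub {a : ℝ} (ha : a ≠ 0) (E η c t : ℝ) :
    t ^ 2 + 2 * a * η * E - a - a * η ^ 2 * ((1 + t ^ 2 / a) * E) ^ 2 - 2 * c * t ≤
      (t - η * (t * E) - c) ^ 2 - a * (1 - η * ((1 + t ^ 2 / a) * E)) ^ 2 := by
  have gain : a * ((1 + t ^ 2 / a) * E) - t * (t * E) = a * E := by
    field_simp
    ring
  linarith [sq_nonneg (η * (t * E) + c), congrArg (fun z => 2 * η * z) gain]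

theorem setIntegral_pos_of_interior_nonempty {α : Type*} [TopologicalSpace α] [T2Space α]
    [MeasurableSpace α] [BorelSpace α] {μ : Measure α} [IsFiniteMeasureOnCompacts μ]
    [μ.IsOpenPosMeasure] {K : Set α} (hK : IsCompact K) (hKint : (interior K).Nonempty)
    {u : α → ℝ} (hu : Continuous u) (hu0 : ∀ x, 0 < u x) : 0 < ∫ x in K, u x ∂μ := by
  rw [setIntegral_pos_iff_support_of_nonneg_ae (.of_forall fun x => (hu0 x).le)
    (hu.continuousOn.integrableOn_compact hK), Function.support_eq_univ fun x => (hu0 x).ne',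
    Set.univ_inter]
  exact (isOpen_interior.measure_pos μ hKint).trans_le (measure_mono interior_subset)

namespace IsStronglyLogConcave

variable {ι : Type*} [Fintype ι] {w : (ι → ℝ) → ℝ} {K : Set (ι → ℝ)}

theorem exists_setIntegral_comp_dotProduct_sub_sq_le (hw : IsStronglyLogConcave w)
    (hwc : Continuous w) (hw0 : 0 ≤ w) (hK : IsCompact K) (hKconv : Convex ℝ K)
    (hKw : ∫ x in K, w x ≠ 0) {φ : ℝ → ℝ} (hφ : ContDiff ℝ 2 φ) (v : ι → ℝ) :
    ∃ c, ∫ x in K, (φ (v ⬝ᵥ x) - c) ^ 2 * w x ≤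
      ∫ x in K, v ⬝ᵥ v * deriv φ (v ⬝ᵥ x) ^ 2 * w x := by
  classical
  let L : (ι → ℝ) →L[ℝ] ℝ := ∑ i, v i • ContinuousLinearMap.proj i
  have hL : ∀ x, L x = v ⬝ᵥ x := fun x => by simp [L, dotProduct]
  have hφL := hφ.comp L.contDiff
  have : Continuous (φ ∘ L) := hφL.continuous
  let c := (∫ x in K, (φ ∘ L) x * w x) / ∫ x in K, w x
  have hmean : ∫ x in K, ((φ ∘ L) x - c) * w x = 0 := by
    simp only [sub_mul]
    rw [integral_sub ((by fun_prop : Continuous _).continuousOn.integrableOn_compact hK)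
      ((by fun_prop : Continuous _).continuousOn.integrableOn_compact hK), integral_const_mul,
      div_mul_cancel₀ _ hKw, sub_self]
  have gradient : ∀ x i, fderiv ℝ (fun x => (φ ∘ L) x - c) x (Pi.single i 1) =
      deriv φ (v ⬝ᵥ x) * v i := by
    intro x i
    have hφ' := ((hφ.differentiable (by norm_num)) (L x)).hasDerivAt
    rw [fderiv_sub_const, (hφ'.comp_hasFDerivAt x L.hasFDerivAt).fderiv]
    simp [hL]
  have h := hw.setIntegral_sq_le_setIntegral_sum_fderiv_sq hwc hw0 hK hKconv
    (hφL.sub contDiff_const) hmean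
  simp_rw [gradient] at h
  simp only [Function.comp_apply, hL, mul_pow, ← Finset.mul_sum] at h
  exact ⟨c, by simpa only [dotProduct, ← sq, mul_comm] using h⟩

-- This is the Poincaré inequality for the tilt `t - η ψ(t)` of `t = v ⬝ᵥ x`. With `a = v ⬝ᵥ v`, the
-- function `ψ(t) = t exp (t² / 2a)` solves `a dψ/dt - t ψ = a exp (t² / 2a)`, whose positivity
-- makes the first-order term in `η` a gain.
theorem setIntegral_dotProduct_sq_add_le (hw : IsStronglyLogConcave w)
    (hwc : Continuous w) (hw0 : 0 ≤ w) (hK : IsCompact K) (hKconv : Convex ℝ K)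
    (hKw : ∫ x in K, w x ≠ 0) {v : ι → ℝ} (hv : v ≠ 0)
    (hmean : ∫ x in K, v ⬝ᵥ x * w x = 0) (η : ℝ) :
    (∫ x in K, (v ⬝ᵥ x) ^ 2 * w x) +
        2 * (v ⬝ᵥ v) * η * (∫ x in K, exp ((v ⬝ᵥ x) ^ 2 / (2 * (v ⬝ᵥ v))) * w x) ≤
      v ⬝ᵥ v * (∫ x in K, w x) + v ⬝ᵥ v * η ^ 2 *
        ∫ x in K, ((1 + (v ⬝ᵥ x) ^ 2 / (v ⬝ᵥ v)) * exp ((v ⬝ᵥ x) ^ 2 / (2 * (v ⬝ᵥ v)))) ^ 2 *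
          w x := by
  have integrable {u : (ι → ℝ) → ℝ} (hu : Continuous u) : IntegrableOn u K :=
    hu.continuousOn.integrableOn_compact hK
  set a := v ⬝ᵥ v
  have ha : 0 < a := by simpa using dotProduct_star_self_pos_iff.2 hv
  let ψ : ℝ → ℝ := fun t => t * exp (t ^ 2 / (2 * a))
  let ψ' : ℝ → ℝ := fun t => (1 + t ^ 2 / a) * exp (t ^ 2 / (2 * a))
  have hψ : ContDiff ℝ 2 ψ := by fun_prop
  have hψc := hψ.continuous
  have hφ : ContDiff ℝ 2 fun t => t - η * ψ t := by fun_prop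
  have hφ' : (deriv fun t => t - η * ψ t) = fun t => 1 - η * ψ' t := funext fun t =>
    ((hasDerivAt_id' t).sub ((hasDerivAt_mul_exp_sq_div ha.ne' t).const_mul η)).deriv
  obtain ⟨c, poincare⟩ :=
    hw.exists_setIntegral_comp_dotProduct_sub_sq_le hwc hw0 hK hKconv hKw hφ v
  have pointwise (x : ι → ℝ) : (v ⬝ᵥ x) ^ 2 * w x + 2 * a * η *
      (exp ((v ⬝ᵥ x) ^ 2 / (2 * a)) * w x) - a * w x - a * η ^ 2 * (ψ' (v ⬝ᵥ x) ^ 2 * w x) -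
      2 * c * (v ⬝ᵥ x * w x) ≤
        (v ⬝ᵥ x - η * ψ (v ⬝ᵥ x) - c) ^ 2 * w x - a * (1 - η * ψ' (v ⬝ᵥ x)) ^ 2 * w x := by
    linarith [mul_le_mul_of_nonneg_right
      (sq_sub_le_tilt_sq_sub ha.ne' (exp ((v ⬝ᵥ x) ^ 2 / (2 * a))) η c (v ⬝ᵥ x)) (hw0 x)]
  have integrated := setIntegral_mono (s := K) (integrable (by fun_prop)) (integrable (by fun_prop))
    pointwise
  rw [integral_sub (integrable (by fun_prop)) (integrable (by fun_prop)),
    integral_sub (integrable (by fun_prop)) (integrable (by fun_prop)),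
    integral_sub (integrable (by fun_prop)) (integrable (by fun_prop)),
    integral_add (integrable (by fun_prop)) (integrable (by fun_prop)),
    integral_sub (integrable (by fun_prop)) (integrable (by fun_prop))] at integrated
  simp only [integral_const_mul, hmean] at integrated
  simp only [hφ'] at poincare
  linarith

theorem setIntegral_dotProduct_sq_lt (hw : IsStronglyLogConcave w)
    (hwc : Continuous w) (hw0 : ∀ x, 0 < w x) (hK : IsCompact K) (hKconv : Convex ℝ K)
    (hKint : (interior K).Nonempty) {v : ι → ℝ} (hv : v ≠ 0)
    (hmean : ∫ x in K, v ⬝ᵥ x * w x = 0) :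
    ∫ x in K, (v ⬝ᵥ x) ^ 2 * w x < v ⬝ᵥ v * ∫ x in K, w x := by
  have ha : 0 < v ⬝ᵥ v := by simpa using dotProduct_star_self_pos_iff.2 hv
  have hW := setIntegral_pos_of_interior_nonempty (μ := volume) hK hKint hwc hw0
  have tilted := hw.setIntegral_dotProduct_sq_add_le hwc (fun x => (hw0 x).le) hK hKconv hW.ne' hv
    hmean
  set D := ∫ x in K, exp ((v ⬝ᵥ x) ^ 2 / (2 * (v ⬝ᵥ v))) * w x
  set P := ∫ x in K, ((1 + (v ⬝ᵥ x) ^ 2 / (v ⬝ᵥ v)) * exp ((v ⬝ᵥ x) ^ 2 / (2 * (v ⬝ᵥ v)))) ^ 2 *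
    w x
  have hD : 0 < D := setIntegral_pos_of_interior_nonempty hK hKint (by fun_prop) fun x =>
    mul_pos (exp_pos _) (hw0 x)
  have hP : 0 < P := setIntegral_pos_of_interior_nonempty hK hKint (by fun_prop) fun x =>
    mul_pos (by positivity) (hw0 x)
  have gain : 2 * (v ⬝ᵥ v) * (D / P) * D - v ⬝ᵥ v * (D / P) ^ 2 * P = v ⬝ᵥ v * (D ^ 2 / P) := by
    field_simp
    ring
  have : 0 < v ⬝ᵥ v * (D ^ 2 / P) := by positivity
  linarith [tilted (D / P)]

end IsStronglyLogConcave

end StronglyLogConcave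

section GaussianDensity

variable {ι κ : Type*} [Fintype ι] [DecidableEq ι] [Fintype κ] [DecidableEq κ]

/-- The density at `z` of the centred Gaussian measure with covariance matrix `S`, meaningful for
positive definite `S`. -/
noncomputable def gaussianDensity (S : Matrix ι ι ℝ) (z : ι → ℝ) : ℝ :=
  (√((2 * π) ^ Fintype.card ι * S.det))⁻¹ * exp (-(1 / 2) * (z ⬝ᵥ (S⁻¹ *ᵥ z)))

theorem gaussianDensity_one (z : ι → ℝ) :
    gaussianDensity 1 z = (√((2 * π) ^ Fintype.card ι))⁻¹ * exp (-(1 / 2) * (z ⬝ᵥ z)) := by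
  simp [gaussianDensity]

theorem gaussianDensity_one_pos (z : ι → ℝ) : 0 < gaussianDensity 1 z := by
  rw [gaussianDensity_one]
  positivity

theorem continuous_gaussianDensity (S : Matrix ι ι ℝ) : Continuous (gaussianDensity S) := by
  unfold gaussianDensity
  fun_prop

theorem gaussianDensity_one_neg (z : ι → ℝ) :
    gaussianDensity 1 (-z) = gaussianDensity 1 z := by
  simp [gaussianDensity_one]

theorem gaussianDensity_one_sumElim (x : ι → ℝ) (y : κ → ℝ) :
    gaussianDensity 1 (Sum.elim x y) = gaussianDensity 1 x * gaussianDensity 1 y := by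
  simp only [gaussianDensity_one, Fintype.card_sum, sumElim_dotProduct_sumElim, mul_add, exp_add,
    pow_add, Real.sqrt_mul (by positivity : (0 : ℝ) ≤ (2 * π) ^ Fintype.card ι), mul_inv]
  ring

theorem isStronglyLogConcave_gaussianDensity_one :
    IsStronglyLogConcave (gaussianDensity (1 : Matrix ι ι ℝ)) := by
  intro x y
  have parallelogram : -(1 / 2) * (x ⬝ᵥ x) + -(1 / 2) * (y ⬝ᵥ y) =
      2 * (-(1 / 2) * (midpoint ℝ x y ⬝ᵥ midpoint ℝ x y)) + -((x - y) ⬝ᵥ (x - y)) / 4 := by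
    simp only [midpoint_eq_smul_add, dotProduct_smul, smul_dotProduct, dotProduct_add,
      add_dotProduct, dotProduct_sub, sub_dotProduct, dotProduct_comm y x, smul_eq_mul,
      invOf_eq_inv]
    ring
  simp only [gaussianDensity_one]
  rw [mul_mul_mul_comm, ← exp_add, parallelogram, exp_add, mul_pow _ (exp _), ← exp_nat_mul,
    Nat.cast_ofNat, ← sq, mul_assoc]

end GaussianDensity

theorem map_setIntegral_smul {α V E : Type*} [TopologicalSpace α] [T2Space α] [MeasurableSpace α]
    [BorelSpace α] {μ : Measure α} [IsFiniteMeasureOnCompacts μ] [NormedAddCommGroup V]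
    [NormedSpace ℝ V] [FiniteDimensional ℝ V] [NormedAddCommGroup E] [NormedSpace ℝ E]
    [CompleteSpace E] {K : Set α} (hK : IsCompact K) {w : α → ℝ} (hw : Continuous w) {f : α → V}
    (hf : Continuous f) (T : V →ₗ[ℝ] E) :
    T (∫ x in K, w x • f x ∂μ) = ∫ x in K, w x • T (f x) ∂μ := by
  have := FiniteDimensional.complete ℝ V
  simpa using (T.toContinuousLinearMap.integral_comp_comm
    ((hw.smul hf).continuousOn.integrableOn_compact (μ := μ) hK)).symm

section GaussianMomentDefect

open scoped Matrix.Norms.Operator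

variable {ι : Type*} [Fintype ι] [DecidableEq ι] {K : Set (ι → ℝ)}

/-- The matrix `∫ x in K, (1 - x xᵀ) dγ` for the standard Gaussian measure `γ`: the amount by which
the second moments of the restriction of `γ` to `K` fall short of `γ(K)` times the identity. Its
positive definiteness makes the Hessian of the mass of a product set positive definite. -/
noncomputable def gaussianMomentDefect (K : Set (ι → ℝ)) : Matrix ι ι ℝ :=
  ∫ x in K, gaussianDensity 1 x • (1 - vecMulVec x x)

theorem map_gaussianMomentDefect {E : Type*} [NormedAddCommGroup E] [NormedSpace ℝ E]
    [CompleteSpace E] (hK : IsCompact K) (T : Matrix ι ι ℝ →ₗ[ℝ] E) :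
    T (gaussianMomentDefect K) = ∫ x in K, gaussianDensity 1 x • T (1 - vecMulVec x x) :=
  map_setIntegral_smul hK (continuous_gaussianDensity 1) (by fun_prop) T

theorem isHermitian_gaussianMomentDefect (hK : IsCompact K) :
    (gaussianMomentDefect K).IsHermitian := by
  have h := map_gaussianMomentDefect hK (transposeLinearEquiv ι ι ℝ ℝ).toLinearMap
  simpa [IsHermitian, conjTranspose_eq_transpose_of_trivial, gaussianMomentDefect] using h

theorem dotProduct_gaussianMomentDefect_mulVec (hK : IsCompact K) (v : ι → ℝ) :
    v ⬝ᵥ gaussianMomentDefect K *ᵥ v = v ⬝ᵥ v * (∫ x in K, gaussianDensity 1 x) -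
      ∫ x in K, (v ⬝ᵥ x) ^ 2 * gaussianDensity 1 x := by
  have hγ := continuous_gaussianDensity (1 : Matrix ι ι ℝ)
  have hT : IsLinearMap ℝ fun M : Matrix ι ι ℝ => v ⬝ᵥ M *ᵥ v :=
    ⟨by simp [add_mulVec], by simp [smul_mulVec]⟩
  have expand (x : ι → ℝ) : gaussianDensity 1 x • (v ⬝ᵥ (1 - vecMulVec x x) *ᵥ v) =
      v ⬝ᵥ v * gaussianDensity 1 x - (v ⬝ᵥ x) ^ 2 * gaussianDensity 1 x := by
    simp [sub_mulVec, vecMulVec_mulVec, dotProduct_comm x v]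
    ring
  have h := map_gaussianMomentDefect hK hT.mk'
  simp only [IsLinearMap.mk'_apply, expand] at h
  rw [h, integral_sub, integral_const_mul]
  all_goals exact (by fun_prop : Continuous _).continuousOn.integrableOn_compact hK

theorem posDef_gaussianMomentDefect (hK : IsCompact K) (hKconv : Convex ℝ K)
    (hKint : (interior K).Nonempty) (hmean : ∫ x in K, gaussianDensity 1 x • x = 0) :
    (gaussianMomentDefect K).PosDef := by
  have hγ := continuous_gaussianDensity (1 : Matrix ι ι ℝ)
  refine .of_dotProduct_mulVec_pos (isHermitian_gaussianMomentDefect hK) fun v hv => ?_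
  have linear_mean : ∫ x in K, v ⬝ᵥ x * gaussianDensity 1 x = 0 := by
    have h := map_setIntegral_smul (μ := volume) hK hγ continuous_id (dotProductBilin ℝ ℝ v)
    simpa [hmean, mul_comm] using h.symm
  rw [star_trivial, dotProduct_gaussianMomentDefect_mulVec hK, sub_pos]
  exact isStronglyLogConcave_gaussianDensity_one.setIntegral_dotProduct_sq_lt hγ
    gaussianDensity_one_pos hK hKconv hKint hv linear_mean

theorem setIntegral_prod_trace_eq {κ : Type*} [Fintype κ] [DecidableEq κ] {L : Set (κ → ℝ)}
    (hK : IsCompact K) (hL : IsCompact L) (B : Matrix ι κ ℝ) :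
    ∫ p in K ×ˢ L, gaussianDensity 1 p.1 * gaussianDensity 1 p.2 *
        trace (Bᵀ * (1 - vecMulVec p.1 p.1) * B * (1 - vecMulVec p.2 p.2)) =
      trace (Bᵀ * gaussianMomentDefect K * B * gaussianMomentDefect L) := by
  have hγ := continuous_gaussianDensity (1 : Matrix ι ι ℝ)
  have hγ' := continuous_gaussianDensity (1 : Matrix κ κ ℝ)
  have hright (A : Matrix ι ι ℝ) : IsLinearMap ℝ fun M : Matrix κ κ ℝ => trace (Bᵀ * A * B * M) :=
    ⟨by simp [mul_add], by simp⟩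
  have inner (A : Matrix ι ι ℝ) : trace (Bᵀ * A * B * gaussianMomentDefect L) =
      ∫ y in L, gaussianDensity 1 y * trace (Bᵀ * A * B * (1 - vecMulVec y y)) :=
    map_gaussianMomentDefect hL (hright A).mk'
  have hleft : IsLinearMap ℝ fun M : Matrix ι ι ℝ => trace (Bᵀ * M * B * gaussianMomentDefect L) :=
    ⟨by simp [Matrix.mul_add, Matrix.add_mul], by simp⟩
  have integrable : IntegrableOn (fun p : (ι → ℝ) × (κ → ℝ) =>
      gaussianDensity 1 p.1 * gaussianDensity 1 p.2 *
        trace (Bᵀ * (1 - vecMulVec p.1 p.1) * B * (1 - vecMulVec p.2 p.2))) (K ×ˢ L) :=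
    (by fun_prop : Continuous _).continuousOn.integrableOn_compact (hK.prod hL)
  calc _ = ∫ x in K, gaussianDensity 1 x * ∫ y in L, gaussianDensity 1 y *
          trace (Bᵀ * (1 - vecMulVec x x) * B * (1 - vecMulVec y y)) := by
        rw [Measure.volume_eq_prod, setIntegral_prod _ integrable]
        simp only [mul_assoc, integral_const_mul]
    _ = ∫ x in K, gaussianDensity 1 x *
          trace (Bᵀ * (1 - vecMulVec x x) * B * gaussianMomentDefect L) := by
        simp only [inner]
    _ = _ := (map_gaussianMomentDefect hK hleft.mk').symm

end GaussianMomentDefect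

theorem exists_pos_mul_norm_sq_le {E : Type*} [NormedAddCommGroup E] [NormedSpace ℝ E]
    [ProperSpace E] {q : E → ℝ} (hq : Continuous q) (hsmul : ∀ (t : ℝ) v, q (t • v) = t ^ 2 * q v)
    (hpos : ∀ v, v ≠ 0 → 0 < q v) : ∃ c > 0, ∀ v, c * ‖v‖ ^ 2 ≤ q v := by
  have h0 : q 0 = 0 := by simpa using hsmul 0 0
  rcases (Metric.sphere (0 : E) 1).eq_empty_or_nonempty with hS | hS
  · have trivial_space (v : E) : v = 0 := by
      by_contra hv
      exact Set.notMem_empty (‖v‖⁻¹ • v) (hS ▸ by simp [norm_smul, hv])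
    exact ⟨1, one_pos, fun v => by simp [trivial_space v, h0]⟩
  · obtain ⟨u, hu, hmin⟩ := (isCompact_sphere (0 : E) 1).exists_isMinOn hS hq.continuousOn
    refine ⟨q u, hpos u (ne_zero_of_mem_unit_sphere ⟨u, hu⟩), fun v => ?_⟩
    rcases eq_or_ne v 0 with rfl | hv
    · simp [h0]
    have unit : q u ≤ q (‖v‖⁻¹ • v) := hmin (by simp [norm_smul, hv])
    rwa [hsmul, inv_pow, inv_mul_eq_div, le_div_iff₀ (by positivity)] at unit

theorem trace_transpose_mul_mul_mul_pos {ι κ : Type*} [Fintype ι] [Fintype κ]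
    {L : Matrix ι ι ℝ} {K : Matrix κ κ ℝ} (hL : L.PosDef) (hK : K.PosDef) {B : Matrix ι κ ℝ}
    (hB : B ≠ 0) : 0 < trace (Bᵀ * L * B * K) := by
  classical
  have hKt : Kᵀ = K := (conjTranspose_eq_transpose_of_trivial K).symm.trans hK.isHermitian
  have h := (hK.kronecker hL).dotProduct_mulVec_pos (x := vec B) (by simpa using hB)
  rw [star_trivial, kronecker_mulVec_vec, vec_dotProduct_vec, hKt] at h
  simpa only [Matrix.mul_assoc] using h

theorem one_add_add_add_sq_div_two_sub_le_exp {a b s c r : ℝ} (hc : 0 ≤ c) (hr : 0 ≤ r)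
    (hr1 : r ≤ 1) (hb : |b| ≤ c * r) (ha : |a| ≤ c * r ^ 2) (hs : |s - (b + a)| ≤ c * r ^ 3) :
    1 + b + a + b ^ 2 / 2 - (c + 2 * c ^ 2 + 27 * c ^ 3) * r ^ 3 ≤ exp s := by
  have hr21 : r ^ 2 ≤ r := pow_le_of_le_one hr hr1 two_ne_zero
  have hr32 : r ^ 3 ≤ r ^ 2 := pow_le_pow_of_le_one hr hr1 (by norm_num)
  have size : |s - b| ≤ 2 * c * r ^ 2 := by
    have := abs_le.1 ha; have := abs_le.1 hs; have := mul_le_mul_of_nonneg_left hr32 hc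
    exact abs_le.2 ⟨by linarith, by linarith⟩
  have hs3 : |s| ≤ 3 * c * r := by
    have := abs_le.1 hb; have := abs_le.1 size; have := mul_le_mul_of_nonneg_left hr21 hc
    exact abs_le.2 ⟨by linarith, by linarith⟩
  have square : b ^ 2 / 2 - 2 * c ^ 2 * r ^ 3 ≤ s ^ 2 / 2 := by
    have h : |b * (s - b)| ≤ (c * r) * (2 * c * r ^ 2) := by
      rw [abs_mul]
      gcongr
    linarith [(abs_le.1 h).1, sq_nonneg (s - b)]
  have cube : |s| ^ 3 ≤ 27 * c ^ 3 * r ^ 3 := by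
    calc |s| ^ 3 ≤ (3 * c * r) ^ 3 := by gcongr
      _ = 27 * c ^ 3 * r ^ 3 := by ring
  linarith [one_add_add_sq_div_two_sub_le_exp s, (abs_le.1 hs).1]

section DensityExpansion

open scoped Matrix.Norms.Operator Topology

variable {ι κ : Type*} [Fintype ι] [Fintype κ]

theorem abs_dotProduct_le_card_mul_norm_mul_norm (u v : ι → ℝ) :
    |u ⬝ᵥ v| ≤ Fintype.card ι * (‖u‖ * ‖v‖) := by
  calc |u ⬝ᵥ v| ≤ ∑ i, |u i * v i| := Finset.abs_sum_le_sum_abs _ _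
    _ ≤ ∑ _i : ι, ‖u‖ * ‖v‖ := Finset.sum_le_sum fun i _ => by
        rw [abs_mul]
        exact mul_le_mul (norm_le_pi_norm u i) (norm_le_pi_norm v i) (abs_nonneg _) (norm_nonneg _)
    _ = Fintype.card ι * (‖u‖ * ‖v‖) := by simp

theorem abs_dotProduct_mulVec_self_le (A : Matrix ι ι ℝ) (z : ι → ℝ) :
    |z ⬝ᵥ A *ᵥ z| ≤ Fintype.card ι * ‖z‖ ^ 2 * ‖A‖ := by
  calc |z ⬝ᵥ A *ᵥ z| ≤ Fintype.card ι * (‖z‖ * ‖A *ᵥ z‖) :=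
        abs_dotProduct_le_card_mul_norm_mul_norm z _
    _ ≤ Fintype.card ι * (‖z‖ * (‖A‖ * ‖z‖)) := by
        gcongr
        exact linfty_opNorm_mulVec A z
    _ = Fintype.card ι * ‖z‖ ^ 2 * ‖A‖ := by ring

theorem abs_trace_le_card_mul_norm (A : Matrix ι ι ℝ) : |trace A| ≤ Fintype.card ι * ‖A‖ := by
  classical
  have entry (i : ι) : |A i i| ≤ ‖A‖ := by
    have h := (norm_le_pi_norm (A *ᵥ Pi.single i 1) i).trans (linfty_opNorm_mulVec A _)
    simpa [Pi.norm_single] using h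
  calc |trace A| ≤ ∑ i, |A i i| := Finset.abs_sum_le_sum_abs _ _
    _ ≤ ∑ _i : ι, ‖A‖ := Finset.sum_le_sum fun i _ => entry i
    _ = Fintype.card ι * ‖A‖ := by simp

theorem sumElim_dotProduct_fromBlocks_mulVec (A : Matrix ι ι ℝ) (B : Matrix ι κ ℝ)
    (C : Matrix κ ι ℝ) (D : Matrix κ κ ℝ) (x : ι → ℝ) (y : κ → ℝ) :
    Sum.elim x y ⬝ᵥ fromBlocks A B C D *ᵥ Sum.elim x y =
      x ⬝ᵥ A *ᵥ x + x ⬝ᵥ B *ᵥ y + (y ⬝ᵥ C *ᵥ x + y ⬝ᵥ D *ᵥ y) := by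
  simp [fromBlocks_mulVec, sumElim_dotProduct_sumElim]

theorem sumElim_dotProduct_fromBlocks_transpose_mulVec (B : Matrix ι κ ℝ) (x : ι → ℝ)
    (y : κ → ℝ) :
    Sum.elim x y ⬝ᵥ fromBlocks 0 B Bᵀ 0 *ᵥ Sum.elim x y = 2 * (x ⬝ᵥ B *ᵥ y) := by
  rw [sumElim_dotProduct_fromBlocks_mulVec, mulVec_transpose, dotProduct_comm y,
    ← dotProduct_mulVec]
  simp [two_mul]

theorem norm_sumElim_le {x : ι → ℝ} {y : κ → ℝ} {R : ℝ} (hx : ‖x‖ ≤ R) (hy : ‖y‖ ≤ R) :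
    ‖Sum.elim x y‖ ≤ R := by
  refine (pi_norm_le_iff_of_nonneg ((norm_nonneg x).trans hx)).2 ?_
  rintro (i | j)
  exacts [(norm_le_pi_norm x i).trans hx, (norm_le_pi_norm y j).trans hy]

theorem exists_norm_fromBlocks_transpose_le :
    ∃ c, ∀ B : Matrix ι κ ℝ, ‖fromBlocks 0 B Bᵀ 0‖ ≤ c * ‖B‖ := by
  have linear : IsLinearMap ℝ fun B : Matrix ι κ ℝ => fromBlocks 0 B Bᵀ 0 :=
    ⟨fun A B => by simp [fromBlocks_add], fun t B => by simp [fromBlocks_smul]⟩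
  exact ⟨_, linear.mk'.toContinuousLinearMap.le_opNorm⟩

variable [DecidableEq ι] [DecidableEq κ]

theorem isBigO_inv_one_add_sub :
    (fun M : Matrix ι ι ℝ => (1 + M)⁻¹ - (1 - M + M * M)) =O[𝓝 0] fun M => ‖M‖ ^ 3 := by
  refine (NormedRing.inverse_add_norm_diff_nth_order (1 : (Matrix ι ι ℝ)ˣ) 3).congr_left fun M => ?_
  simp [nonsing_inv_eq_ringInverse, Finset.sum_range_succ, sq, sub_eq_add_neg]

theorem exists_eventually_abs_dotProduct_inv_one_add_mulVec_sub_le (R : ℝ) :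
    ∃ C, 0 ≤ C ∧ ∀ᶠ M in 𝓝 (0 : Matrix ι ι ℝ), ∀ z : ι → ℝ, ‖z‖ ≤ R →
      |z ⬝ᵥ (1 + M)⁻¹ *ᵥ z - (z ⬝ᵥ z - z ⬝ᵥ M *ᵥ z + z ⬝ᵥ (M * M) *ᵥ z)| ≤ C * ‖M‖ ^ 3 := by
  obtain ⟨C, hC, hinv⟩ := (isBigO_inv_one_add_sub (ι := ι)).exists_pos
  refine ⟨Fintype.card ι * R ^ 2 * C, by positivity, ?_⟩
  filter_upwards [hinv.bound] with M hM z hz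
  rw [Real.norm_of_nonneg (by positivity)] at hM
  calc _ = |z ⬝ᵥ ((1 + M)⁻¹ - (1 - M + M * M)) *ᵥ z| := by
        simp only [add_mulVec, sub_mulVec, one_mulVec, dotProduct_add, dotProduct_sub]
    _ ≤ Fintype.card ι * ‖z‖ ^ 2 * ‖(1 + M)⁻¹ - (1 - M + M * M)‖ :=
        abs_dotProduct_mulVec_self_le _ z
    _ ≤ Fintype.card ι * R ^ 2 * (C * ‖M‖ ^ 3) := by gcongr
    _ = Fintype.card ι * R ^ 2 * C * ‖M‖ ^ 3 := by ring

theorem exists_eventually_quadratic_sub_le_exp_inv (R : ℝ) :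
    ∃ C, ∀ᶠ M in 𝓝 (0 : Matrix ι ι ℝ), ∀ z : ι → ℝ, ‖z‖ ≤ R →
      1 + (1 / 2) * (z ⬝ᵥ M *ᵥ z) +
          (1 / 2) * ((1 / 2) * trace (M * M) - z ⬝ᵥ (M * M) *ᵥ z) +
          ((1 / 2) * (z ⬝ᵥ M *ᵥ z)) ^ 2 / 2 - C * ‖M‖ ^ 3 ≤
        exp ((1 / 2) * (z ⬝ᵥ z) + (1 / 4) * trace (M * M) -
          (1 / 2) * (z ⬝ᵥ (1 + M)⁻¹ *ᵥ z)) := by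
  obtain ⟨C₀, hC₀, hinv⟩ := exists_eventually_abs_dotProduct_inv_one_add_mulVec_sub_le (ι := ι) R
  set n : ℝ := (Fintype.card ι : ℝ)
  let c := n + n * R ^ 2 + C₀
  refine ⟨c + 2 * c ^ 2 + 27 * c ^ 3, ?_⟩
  filter_upwards [hinv, Metric.ball_mem_nhds 0 one_pos] with M hM hM1 z hz
  have hr1 : ‖M‖ ≤ 1 := (mem_ball_zero_iff.1 hM1).le
  have form (A : Matrix ι ι ℝ) : |z ⬝ᵥ A *ᵥ z| ≤ n * R ^ 2 * ‖A‖ :=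
    (abs_dotProduct_mulVec_self_le A z).trans (by gcongr)
  have linear : |(1 / 2) * (z ⬝ᵥ M *ᵥ z)| ≤ c * ‖M‖ := by
    have : n * R ^ 2 * ‖M‖ ≤ c * ‖M‖ := by
      gcongr
      linarith [Nat.cast_nonneg (α := ℝ) (Fintype.card ι)]
    rw [abs_mul, abs_of_pos one_half_pos]
    linarith [form M, abs_nonneg (z ⬝ᵥ M *ᵥ z)]
  have quadratic : |(1 / 2) * ((1 / 2) * trace (M * M) - z ⬝ᵥ (M * M) *ᵥ z)| ≤ c * ‖M‖ ^ 2 := by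
    have htrace := abs_le.1 (abs_trace_le_card_mul_norm (M * M))
    have hform := abs_le.1 (form (M * M))
    have : (n + n * R ^ 2) * ‖M * M‖ ≤ c * ‖M‖ ^ 2 := by
      gcongr
      · exact le_add_of_nonneg_right hC₀
      · exact (norm_mul_le M M).trans_eq (sq _).symm
    exact abs_le.2 ⟨by linarith, by linarith⟩
  refine one_add_add_add_sq_div_two_sub_le_exp (by positivity) (norm_nonneg M) hr1 linear
    quadratic ?_
  have hcubic : C₀ * ‖M‖ ^ 3 ≤ c * ‖M‖ ^ 3 := by gcongr; exact le_add_of_nonneg_left (by positivity)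
  have hinverse := abs_le.1 (hM z hz)
  exact abs_le.2 ⟨by linarith, by linarith⟩

theorem posDef_one_sub_of_norm_lt {P : Matrix ι ι ℝ} (hP : P.IsHermitian)
    (hnorm : Fintype.card ι * ‖P‖ < 1) : (1 - P).PosDef := by
  refine .of_dotProduct_mulVec_pos (isHermitian_one.sub hP) fun v hv => ?_
  have hvv : 0 < v ⬝ᵥ v := by simpa using dotProduct_star_self_pos_iff.2 hv
  have small : v ⬝ᵥ P *ᵥ v < v ⬝ᵥ v := by
    calc v ⬝ᵥ P *ᵥ v ≤ Fintype.card ι * ‖v‖ ^ 2 * ‖P‖ :=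
          (le_abs_self _).trans (abs_dotProduct_mulVec_self_le P v)
      _ ≤ Fintype.card ι * (v ⬝ᵥ v) * ‖P‖ := by
          gcongr
          exact norm_sq_le_dotProduct_self v
      _ = Fintype.card ι * ‖P‖ * (v ⬝ᵥ v) := by ring
      _ < v ⬝ᵥ v := mul_lt_of_lt_one_left hvv hnorm
  simpa [sub_mulVec] using small

theorem det_le_exp_trace_sub_card {M : Matrix ι ι ℝ} (hM : M.PosSemidef) :
    M.det ≤ exp (M.trace - Fintype.card ι) := by
  have hsum : M.trace - Fintype.card ι = ∑ i, (hM.isHermitian.eigenvalues i - 1) := by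
    simp [hM.isHermitian.trace_eq_sum_eigenvalues]
  rw [hsum, exp_sum, hM.isHermitian.det_eq_prod_eigenvalues]
  exact Finset.prod_le_prod (fun i _ => hM.eigenvalues_nonneg i) fun i _ =>
    (sub_add_cancel _ _).symm.trans_le (add_one_le_exp (hM.isHermitian.eigenvalues i - 1))

theorem eventually_det_fromBlocks_pos_and_le_exp :
    ∀ᶠ B in 𝓝 (0 : Matrix ι κ ℝ), 0 < (fromBlocks 1 B Bᵀ 1).det ∧
      (fromBlocks 1 B Bᵀ 1).det ≤ exp (-trace (Bᵀ * B)) := by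
  have hsmall : ∀ᶠ B in 𝓝 (0 : Matrix ι κ ℝ), Fintype.card κ * ‖Bᵀ * B‖ < 1 := by
    have h : Continuous fun B : Matrix ι κ ℝ => (Fintype.card κ : ℝ) * ‖Bᵀ * B‖ := by fun_prop
    exact h.continuousAt.eventually_lt_const (by simp)
  filter_upwards [hsmall] with B hB
  have hPD : (1 - Bᵀ * B).PosDef :=
    posDef_one_sub_of_norm_lt (by simpa using isHermitian_conjTranspose_mul_self B) hB
  rw [det_fromBlocks_one₁₁]
  exact ⟨hPD.det_pos, by simpa using det_le_exp_trace_sub_card hPD.posSemidef⟩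

theorem gaussianDensity_one_mul_exp_le {S : Matrix ι ι ℝ} (hS : 0 < S.det) {t : ℝ}
    (ht : S.det ≤ exp (-(2 * t))) (z : ι → ℝ) :
    gaussianDensity 1 z * exp ((1 / 2) * (z ⬝ᵥ z) + t - (1 / 2) * (z ⬝ᵥ S⁻¹ *ᵥ z)) ≤
      gaussianDensity S z := by
  have hroot : exp t ≤ (√S.det)⁻¹ := by
    rw [← neg_neg t, exp_neg]
    refine inv_anti₀ (Real.sqrt_pos.2 hS) ((Real.sqrt_le_left (exp_pos _).le).2 ?_)
    rwa [← exp_nat_mul, Nat.cast_ofNat, mul_neg]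
  calc _ = (√((2 * π) ^ Fintype.card ι))⁻¹ * exp t * exp (-(1 / 2) * (z ⬝ᵥ S⁻¹ *ᵥ z)) := by
        rw [gaussianDensity_one, mul_assoc, mul_assoc, ← exp_add, ← exp_add]
        congr 2
        ring
    _ ≤ (√((2 * π) ^ Fintype.card ι))⁻¹ * (√S.det)⁻¹ * exp (-(1 / 2) * (z ⬝ᵥ S⁻¹ *ᵥ z)) := by
        gcongr
    _ = gaussianDensity S z := by
        rw [gaussianDensity, Real.sqrt_mul (by positivity), mul_inv]

theorem trace_transpose_mul_one_sub_vecMulVec (B : Matrix ι κ ℝ) (x : ι → ℝ) (y : κ → ℝ) :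
    trace (Bᵀ * (1 - vecMulVec x x) * B * (1 - vecMulVec y y)) =
      trace (Bᵀ * B) - x ⬝ᵥ (B * Bᵀ) *ᵥ x - y ⬝ᵥ (Bᵀ * B) *ᵥ y + (x ⬝ᵥ B *ᵥ y) ^ 2 := by
  have h₁ : trace (Bᵀ * vecMulVec x x * B) = x ⬝ᵥ (B * Bᵀ) *ᵥ x := by
    rw [mul_vecMulVec, vecMulVec_mul, trace_vecMulVec, ← mulVec_mulVec, dotProduct_mulVec,
      dotProduct_comm]
  have h₂ : trace (Bᵀ * B * vecMulVec y y) = y ⬝ᵥ (Bᵀ * B) *ᵥ y := by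
    rw [mul_vecMulVec, trace_vecMulVec, dotProduct_comm]
  have h₃ : trace (Bᵀ * vecMulVec x x * B * vecMulVec y y) = (x ⬝ᵥ B *ᵥ y) ^ 2 := by
    rw [mul_vecMulVec Bᵀ, vecMulVec_mul, vecMulVec_mul_vecMulVec, trace_vecMulVec, dotProduct_smul,
      mulVec_transpose, ← dotProduct_mulVec, smul_eq_mul, sq]
  simp only [Matrix.mul_sub, Matrix.sub_mul, Matrix.mul_one, trace_sub, h₁, h₂, h₃]
  ring

theorem exists_eventually_quadratic_sub_le_exp_inv_fromBlocks (R : ℝ) :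
    ∃ C, ∀ᶠ B in 𝓝 (0 : Matrix ι κ ℝ), ∀ x y, ‖x‖ ≤ R → ‖y‖ ≤ R →
      1 + x ⬝ᵥ B *ᵥ y +
          (1 / 2) * trace (Bᵀ * (1 - vecMulVec x x) * B * (1 - vecMulVec y y)) - C * ‖B‖ ^ 3 ≤
        exp ((1 / 2) * (Sum.elim x y ⬝ᵥ Sum.elim x y) + (1 / 2) * trace (Bᵀ * B) -
          (1 / 2) * (Sum.elim x y ⬝ᵥ (fromBlocks 1 B Bᵀ 1)⁻¹ *ᵥ Sum.elim x y)) := by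
  obtain ⟨C, hC⟩ := exists_eventually_quadratic_sub_le_exp_inv (ι := ι ⊕ κ) R
  obtain ⟨c, hnorm⟩ := exists_norm_fromBlocks_transpose_le (ι := ι) (κ := κ)
  have hlim : Filter.Tendsto (fun B : Matrix ι κ ℝ => fromBlocks 0 B Bᵀ 0) (𝓝 0) (𝓝 0) := by
    have h : Continuous fun B : Matrix ι κ ℝ =>
        fromBlocks (0 : Matrix ι ι ℝ) B Bᵀ (0 : Matrix κ κ ℝ) := by fun_prop
    simpa using h.tendsto 0
  refine ⟨|C| * c ^ 3, ?_⟩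
  filter_upwards [hlim.eventually hC] with B hexp x y hx hy
  set M := fromBlocks (0 : Matrix ι ι ℝ) B Bᵀ (0 : Matrix κ κ ℝ)
  have hM : 1 + M = fromBlocks 1 B Bᵀ 1 := by simp [M, ← fromBlocks_one, fromBlocks_add]
  have hMM : M * M = fromBlocks (B * Bᵀ) 0 0 (Bᵀ * B) := by simp [M, fromBlocks_multiply]
  have htr : trace (M * M) = 2 * trace (Bᵀ * B) := by
    rw [hMM, two_mul]
    nth_rw 1 [trace_mul_comm]
    simp [trace, Fintype.sum_sum_type]
  have hform_sq : Sum.elim x y ⬝ᵥ (M * M) *ᵥ Sum.elim x y =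
      x ⬝ᵥ (B * Bᵀ) *ᵥ x + y ⬝ᵥ (Bᵀ * B) *ᵥ y := by
    simp [hMM, sumElim_dotProduct_fromBlocks_mulVec]
  have cubic : C * ‖M‖ ^ 3 ≤ |C| * c ^ 3 * ‖B‖ ^ 3 := by
    calc C * ‖M‖ ^ 3 ≤ |C| * (c * ‖B‖) ^ 3 := by
          gcongr
          exacts [le_abs_self C, hnorm B]
      _ = |C| * c ^ 3 * ‖B‖ ^ 3 := by ring
  have h := hexp _ (norm_sumElim_le hx hy)
  rw [hM, htr, sumElim_dotProduct_fromBlocks_transpose_mulVec, hform_sq] at h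
  rw [trace_transpose_mul_one_sub_vecMulVec]
  exact le_trans (by linarith) (h.trans_eq (by ring_nf))

theorem exists_eventually_le_gaussianDensity_fromBlocks (R : ℝ) :
    ∃ C, ∀ᶠ B in 𝓝 (0 : Matrix ι κ ℝ), ∀ x y, ‖x‖ ≤ R → ‖y‖ ≤ R →
      gaussianDensity 1 x * gaussianDensity 1 y * (1 + x ⬝ᵥ B *ᵥ y +
          (1 / 2) * trace (Bᵀ * (1 - vecMulVec x x) * B * (1 - vecMulVec y y)) - C * ‖B‖ ^ 3) ≤
        gaussianDensity (fromBlocks 1 B Bᵀ 1) (Sum.elim x y) := by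
  obtain ⟨C, hC⟩ := exists_eventually_quadratic_sub_le_exp_inv_fromBlocks (ι := ι) (κ := κ) R
  refine ⟨C, ?_⟩
  filter_upwards [hC, eventually_det_fromBlocks_pos_and_le_exp] with B hexp ⟨hpos, hdet⟩ x y hx hy
  have hle := gaussianDensity_one_mul_exp_le hpos (t := (1 / 2) * trace (Bᵀ * B))
    (hdet.trans_eq (by ring_nf)) (Sum.elim x y)
  rw [gaussianDensity_one_sumElim] at hle
  exact (mul_le_mul_of_nonneg_left (hexp x y hx hy)
    (mul_pos (gaussianDensity_one_pos x) (gaussianDensity_one_pos y)).le).trans hle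

end DensityExpansion

section ProductMass

open scoped Matrix.Norms.Operator Topology

variable {ι κ : Type*} [Fintype ι] [DecidableEq ι] [Fintype κ] [DecidableEq κ]
  {K : Set (ι → ℝ)} {L : Set (κ → ℝ)}

/-- The mass which the centred Gaussian measure with covariance matrix `[[1, B], [Bᵀ, 1]]` gives to
`K × L`, meaningful when this matrix is positive definite. -/
noncomputable def gaussianProdMass (K : Set (ι → ℝ)) (L : Set (κ → ℝ)) (B : Matrix ι κ ℝ) : ℝ :=
  ∫ p in K ×ˢ L, gaussianDensity (fromBlocks 1 B Bᵀ 1) (Sum.elim p.1 p.2)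

theorem continuous_gaussianDensity_sumElim (S : Matrix (ι ⊕ κ) (ι ⊕ κ) ℝ) :
    Continuous fun p : (ι → ℝ) × (κ → ℝ) => gaussianDensity S (Sum.elim p.1 p.2) := by
  have h : Continuous fun p : (ι → ℝ) × (κ → ℝ) => Sum.elim p.1 p.2 :=
    continuous_pi (by rintro (i | j) <;> simp only [Sum.elim_inl, Sum.elim_inr] <;> fun_prop)
  exact (continuous_gaussianDensity S).comp h

theorem gaussianProdMass_zero :
    gaussianProdMass K L 0 =
      ∫ p in K ×ˢ L, gaussianDensity 1 p.1 * gaussianDensity 1 p.2 := by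
  simp [gaussianProdMass, gaussianDensity_one_sumElim]

theorem setIntegral_prod_dotProduct_mulVec_eq_zero (hK : IsCompact K) (hL : IsCompact L)
    (hmean : ∫ y in L, gaussianDensity 1 y • y = 0) (B : Matrix ι κ ℝ) :
    ∫ p in K ×ˢ L, gaussianDensity 1 p.1 * gaussianDensity 1 p.2 * (p.1 ⬝ᵥ B *ᵥ p.2) = 0 := by
  have hγ := continuous_gaussianDensity (1 : Matrix ι ι ℝ)
  have hγ' := continuous_gaussianDensity (1 : Matrix κ κ ℝ)
  have inner (x : ι → ℝ) : ∫ y in L, gaussianDensity 1 y * (x ⬝ᵥ B *ᵥ y) = 0 := by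
    have h := map_setIntegral_smul (μ := volume) hL hγ' continuous_id
      (dotProductBilin ℝ ℝ (x ᵥ* B))
    simpa [hmean, dotProduct_mulVec] using h.symm
  have integrable : IntegrableOn (fun p : (ι → ℝ) × (κ → ℝ) =>
      gaussianDensity 1 p.1 * gaussianDensity 1 p.2 * (p.1 ⬝ᵥ B *ᵥ p.2)) (K ×ˢ L) :=
    (by fun_prop : Continuous _).continuousOn.integrableOn_compact (hK.prod hL)
  rw [Measure.volume_eq_prod, setIntegral_prod _ integrable]
  simp [mul_assoc, integral_const_mul, inner]

theorem setIntegral_prod_quadratic_eq (hK : IsCompact K) (hL : IsCompact L)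
    (hmean : ∫ y in L, gaussianDensity 1 y • y = 0) (B : Matrix ι κ ℝ) (e : ℝ) :
    ∫ p in K ×ˢ L, gaussianDensity 1 p.1 * gaussianDensity 1 p.2 * (1 + p.1 ⬝ᵥ B *ᵥ p.2 +
        (1 / 2) * trace (Bᵀ * (1 - vecMulVec p.1 p.1) * B * (1 - vecMulVec p.2 p.2)) - e) =
      gaussianProdMass K L 0 +
        (1 / 2) * trace (Bᵀ * gaussianMomentDefect K * B * gaussianMomentDefect L) -
        gaussianProdMass K L 0 * e := by
  have hγ := continuous_gaussianDensity (1 : Matrix ι ι ℝ)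
  have hγ' := continuous_gaussianDensity (1 : Matrix κ κ ℝ)
  have integrable {u : (ι → ℝ) × (κ → ℝ) → ℝ} (hu : Continuous u) : IntegrableOn u (K ×ˢ L) :=
    hu.continuousOn.integrableOn_compact (hK.prod hL)
  have expand (a b t : ℝ) :
      a * (1 + b + (1 / 2) * t - e) = a + a * b + (1 / 2) * (a * t) - a * e := by
    ring
  simp only [expand]
  rw [integral_sub (integrable (by fun_prop)) (integrable (by fun_prop)),
    integral_add (integrable (by fun_prop)) (integrable (by fun_prop)),
    integral_add (integrable (by fun_prop)) (integrable (by fun_prop)), integral_mul_const,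
    integral_const_mul, setIntegral_prod_dotProduct_mulVec_eq_zero hK hL hmean,
    setIntegral_prod_trace_eq hK hL, gaussianProdMass_zero, add_zero]

theorem exists_eventually_le_gaussianProdMass (hK : IsCompact K) (hL : IsCompact L)
    (hmean : ∫ y in L, gaussianDensity 1 y • y = 0) :
    ∃ C, ∀ᶠ B in 𝓝 (0 : Matrix ι κ ℝ), gaussianProdMass K L 0 +
        (1 / 2) * trace (Bᵀ * gaussianMomentDefect K * B * gaussianMomentDefect L) -
        C * ‖B‖ ^ 3 ≤ gaussianProdMass K L B := by
  have hγ := continuous_gaussianDensity (1 : Matrix ι ι ℝ)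
  have hγ' := continuous_gaussianDensity (1 : Matrix κ κ ℝ)
  obtain ⟨R, hR⟩ := (hK.prod hL).isBounded.exists_norm_le
  obtain ⟨C, hC⟩ := exists_eventually_le_gaussianDensity_fromBlocks (ι := ι) (κ := κ) R
  refine ⟨gaussianProdMass K L 0 * C, ?_⟩
  filter_upwards [hC] with B hB
  rw [mul_assoc, ← setIntegral_prod_quadratic_eq hK hL hmean]
  refine setIntegral_mono_on ?_ ?_ (hK.prod hL).measurableSet fun p hp =>
    hB p.1 p.2 ((norm_fst_le p).trans (hR p hp)) ((norm_snd_le p).trans (hR p hp))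
  · exact (by fun_prop : Continuous _).continuousOn.integrableOn_compact (hK.prod hL)
  · exact (continuous_gaussianDensity_sumElim _).continuousOn.integrableOn_compact (hK.prod hL)

theorem eventually_mul_norm_cube_lt {E : Type*} [NormedAddCommGroup E] {q : E → ℝ} (C : ℝ) {c : ℝ}
    (hc : 0 < c) (hq : ∀ v, c * ‖v‖ ^ 2 ≤ q v) :
    ∀ᶠ v in 𝓝 (0 : E), v ≠ 0 → C * ‖v‖ ^ 3 < q v := by
  have hsmall : ∀ᶠ v in 𝓝 (0 : E), C * ‖v‖ < c := by
    have h : Continuous fun v : E => C * ‖v‖ := by fun_prop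
    exact h.continuousAt.eventually_lt_const (by simpa)
  filter_upwards [hsmall] with v hv hv0
  have hsq : 0 < ‖v‖ ^ 2 := by positivity
  calc C * ‖v‖ ^ 3 = C * ‖v‖ * ‖v‖ ^ 2 := by ring
    _ < c * ‖v‖ ^ 2 := mul_lt_mul_of_pos_right hv hsq
    _ ≤ q v := hq v

theorem eventually_gaussianProdMass_zero_lt (hK : IsCompact K) (hKconv : Convex ℝ K)
    (hKint : (interior K).Nonempty) (hKmean : ∫ x in K, gaussianDensity 1 x • x = 0)
    (hL : IsCompact L) (hLconv : Convex ℝ L) (hLint : (interior L).Nonempty)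
    (hLmean : ∫ y in L, gaussianDensity 1 y • y = 0) :
    ∀ᶠ B in 𝓝 (0 : Matrix ι κ ℝ), B ≠ 0 → gaussianProdMass K L 0 < gaussianProdMass K L B := by
  have hessian_pos (B : Matrix ι κ ℝ) (hB : B ≠ 0) :
      0 < (1 / 2) * trace (Bᵀ * gaussianMomentDefect K * B * gaussianMomentDefect L) :=
    mul_pos one_half_pos <| trace_transpose_mul_mul_mul_pos
      (posDef_gaussianMomentDefect hK hKconv hKint hKmean)
      (posDef_gaussianMomentDefect hL hLconv hLint hLmean) hB
  obtain ⟨c, hc, hessian⟩ := exists_pos_mul_norm_sq_le (by fun_prop)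
    (fun t B => by simp [Matrix.mul_assoc]; ring) hessian_pos
  obtain ⟨C, hC⟩ := exists_eventually_le_gaussianProdMass hK hL hLmean
  filter_upwards [hC, eventually_mul_norm_cube_lt C hc hessian] with B hexpansion hcubic hB
  linarith [hcubic hB]

end ProductMass

theorem exists_forall_abs_lt_of_eventually_nhds_zero {ι κ : Type*} [Finite ι] [Finite κ]
    {p : Matrix ι κ ℝ → Prop} (hp : ∀ᶠ B in nhds 0, p B) :
    ∃ ε > 0, ∀ B : Matrix ι κ ℝ, (∀ i j, |B i j| < ε) → p B := by
  have := Fintype.ofFinite ι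
  have := Fintype.ofFinite κ
  have hp' : ∀ᶠ B in nhds (0 : ι → κ → ℝ), p (of B) := hp
  obtain ⟨ε, hε, h⟩ := Metric.eventually_nhds_iff.1 hp'
  exact ⟨ε, hε, fun B hB => h ((dist_pi_lt_iff hε).2 fun i => (dist_pi_lt_iff hε).2 fun j => by
    simpa [Real.dist_eq] using hB i j)⟩

theorem closure_ae_eq_of_convex {E : Type*} [NormedAddCommGroup E] [NormedSpace ℝ E]
    [FiniteDimensional ℝ E] [MeasurableSpace E] [BorelSpace E] {μ : Measure E}
    [μ.IsAddHaarMeasure] {s : Set E} (hs : Convex ℝ s) : closure s =ᵐ[μ] s :=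
  closure_ae_eq_of_null_frontier (hs.addHaar_frontier μ)

theorem setIntegral_eq_zero_of_odd {E V : Type*} [AddGroup E] [MeasurableSpace E]
    [MeasurableNeg E] {μ : Measure E} [μ.IsNegInvariant] [NormedAddCommGroup V] [NormedSpace ℝ V]
    {s : Set E} (hs : s = -s) {f : E → V} (hf : f.Odd) : ∫ x in s, f x ∂μ = 0 := by
  have h := (Measure.measurePreserving_neg μ).setIntegral_preimage_emb
    (MeasurableEquiv.neg _).measurableEmbedding f s
  rw [Set.neg_preimage, ← hs] at h
  simp only [hf _, integral_neg] at h
  have := IsAddTorsionFree.of_isTorsionFree ℝ V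
  exact self_eq_neg.1 h.symm

theorem setIntegral_gaussianDensity_one_smul_self_eq_zero {ι : Type*} [Fintype ι] [DecidableEq ι]
    {K : Set (ι → ℝ)} (hK : K = -K) : ∫ x in K, gaussianDensity 1 x • x = 0 :=
  setIntegral_eq_zero_of_odd hK fun x => by simp [gaussianDensity_one_neg]

theorem gaussianProdMass_closure {ι κ : Type*} [Fintype ι] [DecidableEq ι] [Fintype κ]
    [DecidableEq κ] {K : Set (ι → ℝ)} {L : Set (κ → ℝ)} (hK : Convex ℝ K) (hL : Convex ℝ L)
    (B : Matrix ι κ ℝ) :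
    gaussianProdMass (closure K) (closure L) B = gaussianProdMass K L B :=
  setIntegral_congr_set <|
    Measure.set_prod_ae_eq (closure_ae_eq_of_convex hK) (closure_ae_eq_of_convex hL)

theorem gaussianProdMass_eq_setIntegral_setIntegral {ι : Type*} [Fintype ι] [DecidableEq ι]
    {K L : Set (ι → ℝ)} (hK : IsCompact (closure K)) (hL : IsCompact (closure L))
    (B : Matrix ι ι ℝ) :
    gaussianProdMass K L B = ∫ x in K, ∫ y in L,
      ((2 * π) ^ Fintype.card ι * √(fromBlocks 1 B Bᵀ 1).det)⁻¹ *
        exp (-(1 / 2) *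
          (Sum.elim x y ⬝ᵥ ((fromBlocks 1 B Bᵀ 1)⁻¹ *ᵥ Sum.elim x y))) := by
  have integrable : IntegrableOn (fun p : (ι → ℝ) × (ι → ℝ) =>
      gaussianDensity (fromBlocks 1 B Bᵀ 1) (Sum.elim p.1 p.2)) (K ×ˢ L) :=
    ((continuous_gaussianDensity_sumElim _).continuousOn.integrableOn_compact
      (hK.prod hL)).mono_set (Set.prod_mono subset_closure subset_closure)
  have hsqrt : √((2 * π) ^ (Fintype.card ι + Fintype.card ι)) = (2 * π) ^ Fintype.card ι := by
    rw [pow_add, Real.sqrt_mul_self (by positivity)]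
  rw [gaussianProdMass, Measure.volume_eq_prod, setIntegral_prod _ integrable]
  simp only [gaussianDensity, Fintype.card_sum,
    Real.sqrt_mul (by positivity : (0 : ℝ) ≤ (2 * π) ^ (Fintype.card ι + Fintype.card ι)), hsqrt]

theorem gaussian_FtimesG_strict_local_min_general {ι κ : Type*} [Fintype ι] [DecidableEq ι]
    [Fintype κ] [DecidableEq κ] {F : Set (ι → ℝ)} {G : Set (κ → ℝ)}
    (hFconv : Convex ℝ F) (hFmean : ∫ x in F, gaussianDensity 1 x • x = 0)
    (hFcomp : IsCompact (closure F)) (hFint : (interior F).Nonempty)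
    (hGconv : Convex ℝ G) (hGmean : ∫ y in G, gaussianDensity 1 y • y = 0)
    (hGcomp : IsCompact (closure G)) (hGint : (interior G).Nonempty) :
    ∃ ε > 0, ∀ B : Matrix ι κ ℝ, (∀ i j, |B i j| < ε) → B ≠ 0 →
      gaussianProdMass F G 0 < gaussianProdMass F G B := by
  have h := eventually_gaussianProdMass_zero_lt hFcomp hFconv.closure
    (hFint.mono (interior_mono subset_closure))
    ((setIntegral_congr_set (closure_ae_eq_of_convex hFconv)).trans hFmean)
    hGcomp hGconv.closure (hGint.mono (interior_mono subset_closure))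
    ((setIntegral_congr_set (closure_ae_eq_of_convex hGconv)).trans hGmean)
  simp only [gaussianProdMass_closure hFconv hGconv] at h
  exact exists_forall_abs_lt_of_eventually_nhds_zero h

/-- Theorem 2: the Gaussian measure of `F × G` with covariance `[[I, B],[Bᵀ, I]]`,
as a function of `B`, has a strict local minimum at `B = 0`. -/
theorem gaussian_FtimesG_strict_local_min (k : ℕ)
    (F G : Set (Fin k → ℝ))
    (hFconv : Convex ℝ F) (hFsymm : F = -F)
    (hFcomp : IsCompact (closure F)) (hFint : (interior F).Nonempty)
    (hGconv : Convex ℝ G) (hGsymm : G = -G)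
    (hGcomp : IsCompact (closure G)) (hGint : (interior G).Nonempty)
    -- μ_B (F × G) expressed through the Gaussian density with covariance
    -- 𝒜 = [[I, B], [Bᵀ, I]]
    (μFG : Matrix (Fin k) (Fin k) ℝ → ℝ)
    (hμFG : ∀ B : Matrix (Fin k) (Fin k) ℝ,
      μFG B = ∫ x in F, ∫ y in G,
        ((2 * π) ^ k * Real.sqrt (Matrix.fromBlocks 1 B Bᵀ 1).det)⁻¹ *
          Real.exp (-(1/2) *
            (Sum.elim x y ⬝ᵥ ((Matrix.fromBlocks 1 B Bᵀ 1)⁻¹ *ᵥ Sum.elim x y)))) :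
    ∃ ε > 0, ∀ B : Matrix (Fin k) (Fin k) ℝ,
      (∀ i j, |B i j| < ε) → B ≠ 0 → μFG 0 < μFG B := by
  obtain rfl : μFG = gaussianProdMass F G := funext fun B => by
    rw [hμFG, gaussianProdMass_eq_setIntegral_setIntegral hFcomp hGcomp, Fintype.card_fin]
  exact gaussian_FtimesG_strict_local_min_general hFconv
    (setIntegral_gaussianDensity_one_smul_self_eq_zero hFsymm) hFcomp hFint hGconv
    (setIntegral_gaussianDensity_one_smul_self_eq_zero hGsymm) hGcomp hGint
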